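/- arXiv:2203.13942 — 4 statements merged into one kernel-verified Lean document; each statement's English description precedes it below -/
import Mathlib

section
/- (Jordan's inversion theorem.) Let f : ℝ → ℝ be Lebesgue integrable on ℝ and of bounded variation on all of ℝ (i.e., its total variation over ℝ is finite). Fix x ∈ ℝ and let f(x−) and f(x+) denote the left and right limits of f at x (which exist since f is of bounded variation). Then (f(x−)+f(x+))/2 = (1/(2π)) · lim_{T→∞} ∫_{-T}^{T} e^{ixs} f̂(s) ds. -/
open MeasureTheory Filter Topology Set Real

theorem tendsto_integral_sin_mul_atTop {F : ℝ → ℝ} (hF : Integrable F) :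
    Tendsto (fun T : ℝ => ∫ u, sin (T * u) * F u) atTop (𝓝 0) := by
  have h := (Real.tendsto_integral_exp_smul_cocompact (fun u => (F u : ℂ))).mono_left
    atTop_le_cocompact
  have h2 : Tendsto (fun T : ℝ => T / (2 * π)) atTop atTop :=
    tendsto_id.atTop_div_const (by positivity)
  have h3 := (Complex.continuous_im.tendsto _).comp (h.comp h2)
  have h4 := h3.neg
  simp only [Complex.zero_im, neg_zero] at h4
  refine h4.congr fun T => ?_
  simp only [Function.comp]
  rw [← RCLike.im_to_complex, ← integral_im, ← integral_neg]
  · refine integral_congr_ae (ae_of_all _ fun u => ?_)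
    simp only [Circle.smul_def, Real.fourierChar_apply, smul_eq_mul, RCLike.im_to_complex,
      Complex.im_mul_ofReal, Complex.exp_ofReal_mul_I_im]
    rw [show 2 * π * -(u * (T / (2 * π))) = -(T * u) by field_simp, sin_neg]
    ring
  · simpa [mul_comm] using
      (Real.fourierIntegral_convergent_iff (f := fun u : ℝ => (F u : ℂ)) (μ := volume)
        (T / (2 * π))).2 hF.ofReal

theorem mul_sinc_eq_sin_div (T : ℝ) {u : ℝ} (hu : u ≠ 0) :
    T * sinc (T * u) = sin (T * u) / u := by
  rcases eq_or_ne T 0 with rfl | hT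
  · simp
  · rw [sinc_of_ne_zero (mul_ne_zero hT hu)]
    field_simp

theorem tendsto_setIntegral_mul_sinc_zero {g : ℝ → ℝ} {S : Set ℝ} (hS : MeasurableSet S)
    (hg : IntegrableOn (fun u => g u / u) S) :
    Tendsto (fun T : ℝ => ∫ u in S, g u * (T * sinc (T * u))) atTop (𝓝 0) := by
  refine (tendsto_integral_sin_mul_atTop (hg.integrable_indicator hS)).congr fun T => ?_
  rw [← integral_indicator hS]
  refine integral_congr_ae ?_
  filter_upwards [compl_mem_ae_iff.2 (measure_singleton (μ := volume) (0 : ℝ))] with u hu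
  by_cases hu' : u ∈ S
  · simp only [indicator_of_mem hu', mul_sinc_eq_sin_div T hu]
    ring
  · simp [hu']

theorem integral_exp_mul_fourier_eq_sinc {f : ℝ → ℝ} (hf : Integrable f) (x T : ℝ) :
    ∫ s in (-T)..T, Complex.exp (Complex.I * x * s) *
        (∫ t : ℝ, Complex.exp (-(Complex.I * s * t)) * (f t : ℂ)) =
      ((2 * ∫ u, f (x + u) * (T * sinc (T * u)) : ℝ) : ℂ) := by
  have hkernel (t : ℝ) : ∫ s in (-T)..T, Complex.exp (Complex.I * s * (x - t)) =
      ((2 * (T * sinc (T * (t - x))) : ℝ) : ℂ) := by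
    rcases eq_or_ne t x with rfl | ht
    · simp; ring
    have hne : x - t ≠ 0 := sub_ne_zero.2 ht.symm
    have h1 := intervalIntegral.integral_comp_mul_right
      (f := fun y : ℝ => Complex.exp (y * Complex.I)) (a := -T) (b := T) hne
    rw [neg_mul, integral_exp_mul_I_eq_sinc] at h1
    rw [show T * (t - x) = -(T * (x - t)) by ring, sinc_neg]
    convert h1 using 1
    · refine intervalIntegral.integral_congr fun s _ => ?_
      push_cast
      ring_nf
    · have : ((x : ℂ) - t) ≠ 0 := by exact_mod_cast hne
      simp only [Complex.real_smul]
      push_cast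
      field_simp
  have hmul (s : ℝ) : Complex.exp (Complex.I * x * s) *
        (∫ t : ℝ, Complex.exp (-(Complex.I * s * t)) * (f t : ℂ)) =
      ∫ t : ℝ, Complex.exp (Complex.I * s * (x - t)) * (f t : ℂ) := by
    rw [← integral_const_mul]
    refine integral_congr_ae (ae_of_all _ fun t => ?_)
    simp only [← mul_assoc, ← Complex.exp_add]
    ring_nf
  simp_rw [hmul]
  rw [intervalIntegral_integral_swap]
  · simp_rw [intervalIntegral.integral_mul_const, hkernel]
    rw [← integral_const_mul, ← integral_add_left_eq_self _ x, ← integral_complex_ofReal]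
    refine integral_congr_ae (ae_of_all _ fun u => ?_)
    simp only [add_sub_cancel_left]
    push_cast
    ring
  · have : IsFiniteMeasure (volume.restrict (uIoc (-T) T)) :=
      ⟨by simp [uIoc]⟩
    have h1 : Integrable (fun z : ℝ × ℝ => (f z.2 : ℂ))
        ((volume.restrict (uIoc (-T) T)).prod volume) := by
      simpa using (integrable_const (1 : ℂ)).mul_prod (hf.ofReal (𝕜 := ℂ))
    refine h1.mono ?_ (ae_of_all _ fun z => ?_)
    · exact (Continuous.aestronglyMeasurable (by fun_prop)).mul h1.1
    · simp [Function.uncurry, Complex.norm_exp]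

theorem tendsto_integral_gaussian_mul_sinc :
    Tendsto (fun T : ℝ => ∫ u, exp (-u ^ 2 / 2) * (T * sinc (T * u))) atTop (𝓝 π) := by
  have hint : Integrable (fun u : ℝ => exp (-u ^ 2 / 2)) := by
    convert integrable_exp_neg_mul_sq (b := 1 / 2) (by norm_num) using 3
    ring
  have hval : ∫ u : ℝ, exp (-u ^ 2 / 2) = √(2 * π) := by
    convert integral_gaussian (1 / 2) using 3
    · ring_nf
    · ring
  have hfour (s : ℝ) : ∫ t : ℝ, Complex.exp (-(Complex.I * s * t)) * (exp (-t ^ 2 / 2) : ℂ) =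
      ((√(2 * π) * exp (-s ^ 2 / 2) : ℝ) : ℂ) := by
    have h := fourierIntegral_gaussian (b := 1 / 2) (by norm_num) (-s : ℂ)
    convert h using 1
    · refine integral_congr_ae (ae_of_all _ fun t => ?_)
      push_cast
      ring_nf
    · rw [sqrt_eq_rpow]
      push_cast
      rw [Complex.ofReal_cpow (by positivity)]
      push_cast
      ring_nf
  have hT (T : ℝ) : ∫ u, exp (-u ^ 2 / 2) * (T * sinc (T * u)) =
      √(2 * π) / 2 * ∫ s in (-T)..T, exp (-s ^ 2 / 2) := by
    have h := integral_exp_mul_fourier_eq_sinc hint 0 T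
    simp only [hfour] at h
    simp only [Complex.ofReal_zero, mul_zero, zero_mul, Complex.exp_zero, one_mul, zero_add] at h
    rw [intervalIntegral.integral_ofReal, intervalIntegral.integral_const_mul] at h
    have h' := Complex.ofReal_injective h
    linarith
  simp_rw [hT]
  have := (intervalIntegral_tendsto_integral hint tendsto_neg_atTop_atBot tendsto_id).const_mul
    (√(2 * π) / 2)
  rwa [hval, div_mul_eq_mul_div, mul_self_sqrt (by positivity),
    mul_div_cancel_left₀ _ two_ne_zero] at this

theorem integrableOn_mul_sinc {g : ℝ → ℝ} {S : Set ℝ} (hg : IntegrableOn g S) (T : ℝ) :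
    IntegrableOn (fun u => g u * (T * sinc (T * u))) S := by
  refine Integrable.mul_bdd (c := |T|) hg ?_ (ae_of_all _ fun u => ?_)
  · exact (continuous_const.mul
      (continuous_sinc.comp (continuous_const.mul continuous_id))).aestronglyMeasurable
  · rw [norm_mul, norm_eq_abs, norm_eq_abs]
    exact mul_le_of_le_one_right (abs_nonneg _) (abs_sinc_le_one _)

theorem tendsto_setIntegral_Ioi_one_mul_sinc {g : ℝ → ℝ} (hg : Integrable g) :
    Tendsto (fun T : ℝ => ∫ u in Ioi 1, g u * (T * sinc (T * u))) atTop (𝓝 0) := by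
  refine tendsto_setIntegral_mul_sinc_zero measurableSet_Ioi ?_
  refine Integrable.mono hg.integrableOn
    (hg.1.aemeasurable.div measurable_id.aemeasurable).aestronglyMeasurable.restrict ?_
  filter_upwards [ae_restrict_mem measurableSet_Ioi] with u hu
  rw [norm_div]
  refine div_le_self (norm_nonneg _) ?_
  rw [norm_eq_abs]
  exact (le_of_lt hu).trans (le_abs_self _)

theorem tendsto_setIntegral_Ioc_sinc :
    Tendsto (fun T : ℝ => ∫ u in Ioc 0 1, T * sinc (T * u)) atTop (𝓝 (π / 2)) := by
  have hint : Integrable (fun u : ℝ => exp (-u ^ 2 / 2)) := by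
    convert integrable_exp_neg_mul_sq (b := 1 / 2) (by norm_num) using 3
    ring
  have hbound (u : ℝ) (hu : 0 < u) : |exp (-u ^ 2 / 2) - 1| / |u| ≤ u / 2 := by
    have h1 : exp (-u ^ 2 / 2) ≤ 1 := exp_le_one_iff.2 (by nlinarith)
    have h2 := add_one_le_exp (-u ^ 2 / 2)
    rw [abs_of_nonpos (by linarith), abs_of_pos hu, div_le_iff₀ hu]
    nlinarith
  have hnear : Tendsto (fun T : ℝ => ∫ u in Ioc (0 : ℝ) 1, (exp (-u ^ 2 / 2) - 1) *
      (T * sinc (T * u))) atTop (𝓝 0) := by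
    refine tendsto_setIntegral_mul_sinc_zero measurableSet_Ioc ?_
    refine Measure.integrableOn_of_bounded (M := 1) (by simp)
      (Measurable.aestronglyMeasurable (by fun_prop)) ?_
    filter_upwards [ae_restrict_mem measurableSet_Ioc] with u hu
    rw [norm_div, norm_eq_abs, norm_eq_abs]
    linarith [hbound u hu.1, hu.2]
  have hfar : Tendsto (fun T : ℝ => ∫ u in Ioi (1 : ℝ), exp (-u ^ 2 / 2) *
      (T * sinc (T * u))) atTop (𝓝 0) :=
    tendsto_setIntegral_Ioi_one_mul_sinc hint
  have h := (tendsto_integral_gaussian_mul_sinc.div_const 2).sub (hnear.add hfar)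
  simp only [add_zero, sub_zero] at h
  refine h.congr fun T => ?_
  have heven : ∫ u, exp (-u ^ 2 / 2) * (T * sinc (T * u)) =
      2 * ∫ u in Ioi (0 : ℝ), exp (-u ^ 2 / 2) * (T * sinc (T * u)) := by
    rw [← integral_comp_abs (f := fun u => exp (-u ^ 2 / 2) * (T * sinc (T * u)))]
    refine integral_congr_ae (ae_of_all _ fun u => ?_)
    rcases abs_choice u with hu | hu <;> simp [hu, sinc_neg]
  have hone : IntegrableOn (fun _ : ℝ => (1 : ℝ)) (Ioc 0 1) := by simp
  have hsplit := setIntegral_union (Ioc_disjoint_Ioi le_rfl) measurableSet_Ioi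
    (integrableOn_mul_sinc (hint.integrableOn (s := Ioc 0 1)) T)
    (integrableOn_mul_sinc (hint.integrableOn (s := Ioi 1)) T)
  rw [Ioc_union_Ioi_eq_Ioi zero_le_one] at hsplit
  have hsub := integral_sub (integrableOn_mul_sinc (hint.integrableOn (s := Ioc 0 1)) T)
    (integrableOn_mul_sinc hone T)
  simp only [← sub_mul] at hsub
  simp only [one_mul] at hsub
  rw [heven, hsplit, hsub]
  ring

theorem exists_abs_integral_sinc_le :
    ∃ C : ℝ, ∀ T : ℝ, 0 ≤ T → ∀ a ∈ Icc (0 : ℝ) 1, |∫ u in Ioc a 1, T * sinc (T * u)| ≤ C := by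
  have hcont : Continuous fun y : ℝ => ∫ v in (0 : ℝ)..y, sinc v :=
    intervalIntegral.continuous_primitive (fun a b => continuous_sinc.intervalIntegrable a b) 0
  have hscale (T y : ℝ) : ∫ u in (0 : ℝ)..y, T * sinc (T * u) =
      ∫ v in (0 : ℝ)..(T * y), sinc v := by
    rw [intervalIntegral.integral_const_mul, intervalIntegral.mul_integral_comp_mul_left, mul_zero]
  have hlim : Tendsto (fun y : ℝ => ∫ v in (0 : ℝ)..y, sinc v) atTop (𝓝 (π / 2)) := by
    refine tendsto_setIntegral_Ioc_sinc.congr fun T => ?_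
    rw [← intervalIntegral.integral_of_le zero_le_one, hscale, mul_one]
  obtain ⟨N, hN⟩ := eventually_atTop.1 (hlim.abs.eventually_lt_const (lt_add_one _))
  obtain ⟨B, hB⟩ := (isCompact_Icc (a := (0 : ℝ)) (b := N)).exists_bound_of_continuousOn
    hcont.continuousOn
  have hbdd (y : ℝ) (hy : 0 ≤ y) : |∫ v in (0 : ℝ)..y, sinc v| ≤ max B (|π / 2| + 1) := by
    rcases le_total y N with h | h
    · exact (hB y ⟨hy, h⟩).trans (le_max_left _ _)
    · exact (hN y h).le.trans (le_max_right _ _)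
  refine ⟨2 * max B (|π / 2| + 1), fun T hT a ha => ?_⟩
  have hcontT : Continuous fun u : ℝ => T * sinc (T * u) :=
    continuous_const.mul (continuous_sinc.comp (continuous_const.mul continuous_id))
  rw [← intervalIntegral.integral_of_le ha.2,
    ← intervalIntegral.integral_interval_sub_left (hcontT.intervalIntegrable 0 1)
      (hcontT.intervalIntegrable 0 a), hscale, hscale, two_mul]
  exact (abs_sub _ _).trans (add_le_add (hbdd _ (by positivity)) (hbdd _ (mul_nonneg hT ha.1)))

theorem tendsto_setIntegral_mul_sinc_of_monotone_of_tendsto_zero {h : ℝ → ℝ} (hmono : Monotone h)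
    (hlim : Tendsto h (𝓝[>] 0) (𝓝 0)) :
    Tendsto (fun T : ℝ => ∫ u in Ioc 0 1, h u * (T * sinc (T * u))) atTop (𝓝 0) := by
  have hnonneg (u : ℝ) (hu : 0 < u) : 0 ≤ h u := by
    refine le_of_tendsto hlim ?_
    filter_upwards [Ioo_mem_nhdsGT hu] with v hv using hmono hv.2.le
  let F : ℝ → ℝ → ℝ → ℝ := fun T u s => {p : ℝ × ℝ | p.2 < h p.1}.indicator
    (fun p => T * sinc (T * p.1)) (u, s)
  have hA : MeasurableSet {p : ℝ × ℝ | p.2 < h p.1} :=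
    measurableSet_lt measurable_snd (hmono.measurable.comp measurable_fst)
  have hAs (s : ℝ) : MeasurableSet {u | s < h u} :=
    measurableSet_lt measurable_const hmono.measurable
  have hF (T : ℝ) : Integrable (Function.uncurry (F T))
      ((volume.restrict (Ioc 0 1)).prod (volume.restrict (Ioc 0 (h 1)))) := by
    refine Integrable.indicator (f := fun p : ℝ × ℝ => T * sinc (T * p.1)) ?_ hA
    refine Integrable.of_bound (C := |T|) (Continuous.aestronglyMeasurable ?_)
      (ae_of_all _ fun p => ?_)
    · exact continuous_const.mul (continuous_sinc.comp (continuous_const.mul continuous_fst))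
    · rw [norm_mul, norm_eq_abs, norm_eq_abs]
      exact mul_le_of_le_one_right (abs_nonneg _) (abs_sinc_le_one _)
  have hsection (T s : ℝ) : ∫ u in Ioc 0 1, F T u s =
      ∫ u in Ioc 0 1 ∩ {u | s < h u}, T * sinc (T * u) := by
    rw [← setIntegral_indicator (hAs s)]
    rfl
  have hlayer (T : ℝ) : ∫ u in Ioc 0 1, h u * (T * sinc (T * u)) =
      ∫ s in Ioc 0 (h 1), ∫ u in Ioc 0 1, F T u s := by
    rw [← integral_integral_swap (hF T)]
    refine setIntegral_congr_fun measurableSet_Ioc fun u hu => ?_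
    have : ∀ s, F T u s = (Iio (h u)).indicator (fun _ => T * sinc (T * u)) s := fun s => rfl
    simp only [this]
    rw [setIntegral_indicator measurableSet_Iio, setIntegral_const, smul_eq_mul]
    congr 1
    have hset : (Ioc 0 (h 1) ∩ Iio (h u) : Set ℝ) = Ioo 0 (h u) := by
      ext s
      simp only [mem_inter_iff, mem_Ioc, mem_Iio, mem_Ioo]
      exact ⟨fun hs => ⟨hs.1.1, hs.2⟩, fun hs => ⟨⟨hs.1, hs.2.le.trans (hmono hu.2)⟩, hs.2⟩⟩
    rw [hset, Real.volume_real_Ioo_of_le (hnonneg u hu.1), sub_zero]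
  obtain ⟨C, hC⟩ := exists_abs_integral_sinc_le
  simp_rw [hlayer]
  suffices Tendsto (fun T : ℝ => ∫ s in Ioc 0 (h 1), ∫ u in Ioc 0 1, F T u s) atTop
      (𝓝 (∫ _ in Ioc 0 (h 1), (0 : ℝ))) by simpa only [integral_zero] using this
  refine tendsto_integral_filter_of_dominated_convergence (fun _ => C)
    (Eventually.of_forall fun T => (hF T).integral_prod_right.1) ?_ (integrable_const C) ?_
  · filter_upwards [eventually_ge_atTop 0] with T hT
    refine ae_of_all _ fun s => ?_
    rw [hsection, norm_eq_abs]
    rcases (Ioc 0 1 ∩ {u | s < h u}).eq_empty_or_nonempty with hempty | hne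
    · rw [hempty]
      simpa using (abs_nonneg _).trans (hC T hT 1 (by simp))
    · have hbdd : BddBelow (Ioc 0 1 ∩ {u | s < h u}) := ⟨0, fun u hu => hu.1.1.le⟩
      have h0 : 0 ≤ sInf (Ioc 0 1 ∩ {u | s < h u}) := le_csInf hne fun u hu => hu.1.1.le
      have h1 : sInf (Ioc 0 1 ∩ {u | s < h u}) ≤ 1 :=
        (csInf_le hbdd hne.some_mem).trans hne.some_mem.1.2
      have hae : (Ioc 0 1 ∩ {u | s < h u} : Set ℝ) =ᵐ[volume]
          Ioc (sInf (Ioc 0 1 ∩ {u | s < h u})) 1 := by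
        refine EventuallyLE.antisymm ?_ (LE.le.eventuallyLE fun u hu => ?_)
        · refine EventuallyLE.trans (LE.le.eventuallyLE fun u hu => ?_)
            Ioc_ae_eq_Icc.symm.le
          exact ⟨csInf_le hbdd hu, hu.1.2⟩
        · obtain ⟨v, hv, hvu⟩ := exists_lt_of_csInf_lt hne hu.1
          exact ⟨⟨h0.trans_lt hu.1, hu.2⟩, lt_of_lt_of_le hv.2 (hmono hvu.le)⟩
      rw [setIntegral_congr_set hae]
      exact hC T hT _ ⟨h0, h1⟩
  · filter_upwards [ae_restrict_mem measurableSet_Ioc] with s hs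
    simp_rw [hsection]
    obtain ⟨δ, hδ, hδs⟩ := mem_nhdsGT_iff_exists_Ioo_subset.1
      (hlim.eventually_lt_const hs.1)
    have hle (u : ℝ) (hu : u ∈ Ioc 0 1 ∩ {u | s < h u}) : δ ≤ u := by
      by_contra! hlt
      have hlt' : h u < s := hδs ⟨hu.1.1, hlt⟩
      exact lt_asymm hu.2 hlt'
    have hmeas := measurableSet_Ioc.inter (hAs s) (s₁ := Ioc (0 : ℝ) 1)
    have := tendsto_setIntegral_mul_sinc_zero (g := fun _ => 1) hmeas ?_
    · simpa using this
    refine Measure.integrableOn_of_bounded (M := 1 / δ) ?_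
      (Measurable.aestronglyMeasurable (by fun_prop)) ?_
    · exact ((measure_mono inter_subset_left).trans_lt measure_Ioc_lt_top).ne
    · filter_upwards [ae_restrict_mem hmeas] with u hu
      rw [norm_div, norm_one, norm_eq_abs, abs_of_pos hu.1.1]
      exact one_div_le_one_div_of_le hδ (hle u hu)

theorem Monotone.tendsto_setIntegral_mul_sinc {p : ℝ → ℝ} (hmono : Monotone p) {L : ℝ}
    (hlim : Tendsto p (𝓝[>] 0) (𝓝 L)) :
    Tendsto (fun T : ℝ => ∫ u in Ioc 0 1, p u * (T * sinc (T * u))) atTop (𝓝 (L * (π / 2))) := by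
  have h := (tendsto_setIntegral_mul_sinc_of_monotone_of_tendsto_zero
    (h := fun u => p u - L) (fun a b hab => sub_le_sub_right (hmono hab) L)
    (by simpa using hlim.sub_const L)).add (tendsto_setIntegral_Ioc_sinc.const_mul L)
  rw [zero_add] at h
  refine h.congr fun T => ?_
  have hp : IntegrableOn p (Ioc 0 1) :=
    ((hmono.monotoneOn _).integrableOn_isCompact isCompact_Icc).mono_set Ioc_subset_Icc_self
  have hL : IntegrableOn (fun _ : ℝ => L) (Ioc 0 1) := by simp
  rw [← integral_const_mul, ← integral_add (integrableOn_mul_sinc (g := fun u => p u - L) (hp.sub hL) T)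
    (integrableOn_mul_sinc hL T)]
  refine integral_congr_ae (ae_of_all _ fun u => ?_)
  ring

theorem tendsto_setIntegral_Ioi_mul_sinc_of_boundedVariationOn {g : ℝ → ℝ} (hg : Integrable g)
    (hbv : BoundedVariationOn g univ) {L : ℝ} (hlim : Tendsto g (𝓝[>] 0) (𝓝 L)) :
    Tendsto (fun T : ℝ => ∫ u in Ioi 0, g u * (T * sinc (T * u))) atTop (𝓝 (L * (π / 2))) := by
  obtain ⟨p, q, hp, hq, rfl⟩ := hbv.locallyBoundedVariationOn.exists_monotoneOn_sub_monotoneOn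
  rw [monotoneOn_univ] at hp hq
  have hplim := hp.tendsto_nhdsGT 0
  have hqlim := hq.tendsto_nhdsGT 0
  have hL := tendsto_nhds_unique hlim (hplim.sub hqlim)
  have hpq := (hp.tendsto_setIntegral_mul_sinc hplim).sub (hq.tendsto_setIntegral_mul_sinc hqlim)
  have h := hpq.add (tendsto_setIntegral_Ioi_one_mul_sinc hg)
  rw [add_zero, ← sub_mul, ← hL] at h
  refine h.congr fun T => ?_
  have hint {r : ℝ → ℝ} (hr : Monotone r) : IntegrableOn r (Ioc 0 1) :=
    ((hr.monotoneOn _).integrableOn_isCompact isCompact_Icc).mono_set Ioc_subset_Icc_self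
  rw [← Ioc_union_Ioi_eq_Ioi (zero_le_one (α := ℝ)), setIntegral_union (Ioc_disjoint_Ioi le_rfl)
    measurableSet_Ioi (integrableOn_mul_sinc hg.integrableOn T)
    (integrableOn_mul_sinc hg.integrableOn T),
    ← integral_sub (integrableOn_mul_sinc (hint hp) T) (integrableOn_mul_sinc (hint hq) T)]
  simp only [Pi.sub_apply, sub_mul]

/-- Jordan's Fourier inversion theorem: if `f : ℝ → ℝ` is Lebesgue integrable and of
bounded variation on all of `ℝ`, then at each point `x` the symmetric partial inverse
Fourier integrals converge to the average of the one-sided limits of `f` at `x`. -/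
theorem jordan_fourier_inversion (f : ℝ → ℝ)
    (hf : MeasureTheory.Integrable f)
    (hbv : BoundedVariationOn f Set.univ)
    (x fl fr : ℝ)
    (hfl : Filter.Tendsto f (nhdsWithin x (Set.Iio x)) (nhds fl))
    (hfr : Filter.Tendsto f (nhdsWithin x (Set.Ioi x)) (nhds fr)) :
    Filter.Tendsto
      (fun T : ℝ => (1 / (2 * (Real.pi : ℂ))) *
        ∫ s in (-T)..T, Complex.exp (Complex.I * x * s) *
          (∫ t : ℝ, Complex.exp (-(Complex.I * s * t)) * ((f t : ℝ) : ℂ)))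
      Filter.atTop
      (nhds (((fl + fr) / 2 : ℝ) : ℂ)) := by
  have hright := tendsto_setIntegral_Ioi_mul_sinc_of_boundedVariationOn (L := fr)
    (hf.comp_add_left x)
    (ne_top_of_le_ne_top hbv (eVariationOn.comp_le_of_monotoneOn f (t := univ) (fun u => x + u)
      (fun a _ b _ hab => add_le_add_right hab x) (mapsTo_univ _ _)))
    (hfr.comp (tendsto_nhdsWithin_iff.2 ⟨by
      simpa using ((continuous_const_add x).tendsto 0).mono_left nhdsWithin_le_nhds, by
      filter_upwards [self_mem_nhdsWithin] with u hu using lt_add_of_pos_right x hu⟩))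
  have hleft := tendsto_setIntegral_Ioi_mul_sinc_of_boundedVariationOn (L := fl)
    (hf.comp_sub_left x)
    (ne_top_of_le_ne_top hbv (eVariationOn.comp_le_of_antitoneOn f (t := univ) (fun u => x - u)
      (fun a _ b _ hab => sub_le_sub_left hab x) (mapsTo_univ _ _)))
    (hfl.comp (tendsto_nhdsWithin_iff.2 ⟨by
      simpa using ((continuous_sub_left x).tendsto 0).mono_left nhdsWithin_le_nhds, by
      filter_upwards [self_mem_nhdsWithin] with u hu using sub_lt_self x hu⟩))
  have h := (hleft.add hright).const_mul (1 / π)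
  have hlimit : 1 / π * (fl * (π / 2) + fr * (π / 2)) = (fl + fr) / 2 := by
    field_simp
  rw [hlimit] at h
  refine ((Complex.continuous_ofReal.tendsto _).comp h).congr fun T => ?_
  rw [integral_exp_mul_fourier_eq_sinc hf, Function.comp_apply]
  have hint := integrableOn_mul_sinc (hf.comp_add_left x).integrableOn T (S := univ)
  rw [integrableOn_univ] at hint
  have hreflect : ∫ u in Ioi 0, f (x - u) * (T * sinc (T * u)) =
      ∫ u in Iic 0, f (x + u) * (T * sinc (T * u)) := by
    have := integral_comp_neg_Ioi 0 (fun u => f (x + u) * (T * sinc (T * u)))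
    simpa [← sub_eq_add_neg, sinc_neg] using this
  rw [hreflect, intervalIntegral.integral_Iic_add_Ioi hint.integrableOn hint.integrableOn]
  generalize ∫ u, f (x + u) * (T * sinc (T * u)) = J
  push_cast
  field_simp
end

section
/- Let f : ℝ → ℝ be Lebesgue integrable on ℝ and absolutely continuous with integrable derivative, in the sense that there exists h ∈ L¹(ℝ) such that f(y) − f(x) = ∫_x^y h(t) dt for all real x ≤ y. Then for each x ∈ ℝ, f(x) = (1/(2π)) · lim_{T→∞} ∫_{-T}^{T} e^{ixs} f̂(s) ds. -/
open MeasureTheory Filter Topology Complex FourierTransform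

section
variable {E : Type*} [NormedAddCommGroup E] [NormedSpace ℂ E]

/-- The Fourier transform turns a translation into a modulation. -/
lemma fourier_comp_add_right (f : ℝ → E) (a w : ℝ) :
    𝓕 (fun t ↦ f (t + a)) w = Real.fourierChar (a * w) • 𝓕 f w := by
  simpa [mul_comm] using!
    congrFun (VectorFourier.fourierIntegral_comp_add_right Real.fourierChar volume
      (innerₗ ℝ) f a) w

/-- If `h` is integrable and the integrable function `f` is a primitive of `h`, then `w * 𝓕 f w` is
controlled by `𝓕 h w`. -/
lemma norm_smul_fourier_le_norm_fourier_of_sub_eq_integral [CompleteSpace E] {f h : ℝ → E}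
    (hf : Integrable f) (hh : Integrable h)
    (hac : ∀ x y : ℝ, x ≤ y → f y - f x = ∫ t in x..y, h t) (w : ℝ) :
    ‖w • 𝓕 f w‖ ≤ ‖𝓕 h w‖ := by
  rcases eq_or_ne w 0 with rfl | hw
  · simp
  have hw' : 0 < |w| := abs_pos.2 hw
  set a : ℝ := (2 * |w|)⁻¹ with ha
  have ha0 : 0 < a := by positivity
  -- translating by half a period changes the sign
  have hchar : ((Real.fourierChar (a * w) : Circle) : ℂ) = -1 := by
    rw [Real.fourierChar_apply]
    rcases abs_choice w with hs | hs
    · have : 2 * Real.pi * (a * w) = Real.pi := by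
        rw [ha, hs]; field_simp
      rw [this, exp_pi_mul_I]
    · have : 2 * Real.pi * (a * w) = -Real.pi := by
        rw [ha, hs]; field_simp
      rw [this, ofReal_neg, neg_mul, exp_neg, exp_pi_mul_I]; norm_num
  have hint : Integrable
      (Function.uncurry fun u t : ℝ ↦ Real.fourierChar (-(t * w)) • h (t + u))
      ((volume.restrict (Set.uIoc 0 a)).prod volume) := by
    have h1 : Integrable (fun p : ℝ × ℝ ↦ h (p.2 + p.1))
        ((volume.restrict (Set.uIoc 0 a)).prod volume) := by
      have h0 : AEStronglyMeasurable (fun p : ℝ × ℝ ↦ h (p.2 + p.1))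
          ((volume.restrict (Set.uIoc 0 a)).prod volume) := by
        have q : Measure.QuasiMeasurePreserving (fun p : ℝ × ℝ ↦ p.2 + p.1)
            ((volume : Measure ℝ).prod volume) volume := by
          simpa only [add_comm] using! Measure.quasiMeasurePreserving_snd.comp
            (measurePreserving_prod_add volume volume).quasiMeasurePreserving
        refine (hh.1.comp_quasiMeasurePreserving q).mono_ac ?_
        exact (Measure.absolutelyContinuous_of_le Measure.restrict_le_self).prod .rfl
      rw [integrable_prod_iff h0]
      refine ⟨.of_forall fun u ↦ hh.comp_add_right u, ?_⟩
      have (u : ℝ) : ∫ t, ‖h (t + u)‖ = ∫ t, ‖h t‖ := integral_add_right_eq_self (fun t ↦ ‖h t‖) u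
      simp only [this]
      exact integrableOn_const (by simp)
    rw [← integrable_norm_iff]
    · simpa [Function.uncurry_def, Circle.norm_smul] using h1.norm
    · refine AEStronglyMeasurable.smul (Continuous.aestronglyMeasurable ?_) h1.1
      fun_prop
  have key : 𝓕 (fun t ↦ f (t + a)) w - 𝓕 f w =
      ∫ u in (0 : ℝ)..a, Real.fourierChar (u * w) • 𝓕 h w := by
    simp_rw [← fourier_comp_add_right h]
    simp only [Real.fourier_real_eq]
    rw [intervalIntegral_integral_swap hint, ← integral_sub]
    · congr with t
      rw [← smul_sub, hac t (t + a) (by linarith)]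
      simp_rw [Circle.smul_def]
      rw [intervalIntegral.integral_smul, intervalIntegral.integral_comp_add_left, add_zero]
    · simpa [mul_comm] using! (Real.fourierIntegral_convergent_iff w).2 (hf.comp_add_right a)
    · simpa [mul_comm] using! (Real.fourierIntegral_convergent_iff w).2 hf
  rw [fourier_comp_add_right, Circle.smul_def, hchar] at key
  have hle : ‖∫ u in (0 : ℝ)..a, Real.fourierChar (u * w) • 𝓕 h w‖ ≤ ‖𝓕 h w‖ * |a - 0| :=
    intervalIntegral.norm_integral_le_of_norm_le_const fun u _ ↦ by rw [Circle.norm_smul]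
  rw [← key, show (-1 : ℂ) • 𝓕 f w - 𝓕 f w = (-2 : ℂ) • 𝓕 f w by module, norm_smul, sub_zero,
    abs_of_pos ha0, ha] at hle
  rw [norm_smul, Real.norm_eq_abs]
  norm_num at hle
  field_simp at hle
  nlinarith [norm_nonneg (𝓕 h w), mul_nonneg hw'.le (norm_nonneg (𝓕 f w))]

/-- A Tauberian theorem: if `s * G s` tends to zero at infinity, then the symmetric partial integrals
of `G` and its Gaussian means are asymptotically equal. -/
lemma tendsto_integral_sub_integral_gaussian {G : ℝ → E}
    (hG : Continuous G) (hdecay : Tendsto (fun s ↦ s • G s) (cocompact ℝ) (𝓝 0)) :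
    Tendsto (fun T : ℝ ↦ (∫ s in (-T)..T, G s) - ∫ s, Real.exp (-(T⁻¹ * s) ^ 2) • G s)
      atTop (𝓝 0) := by
  obtain ⟨C, hC⟩ : ∃ C, ∀ s, ‖s • G s‖ ≤ C := by
    let g : ZeroAtInftyContinuousMap ℝ E := ⟨⟨fun s ↦ s • G s, by fun_prop⟩, hdecay⟩
    exact ⟨‖g.toBCF‖, g.toBCF.norm_coe_le_norm⟩
  let k : ℝ → ℝ := fun u ↦ (Set.Ioc (-1 : ℝ) 1).indicator 1 u - Real.exp (-u ^ 2)
  have hkm : Measurable k := by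
    refine (measurable_one.indicator measurableSet_Ioc).sub (by fun_prop)
  have hk (u : ℝ) : |k u| ≤ |u| * Real.exp (1 - u ^ 2) := by
    by_cases hu : u ∈ Set.Ioc (-1 : ℝ) 1
    · have h1 : |u| ≤ 1 := abs_le.2 ⟨hu.1.le, hu.2⟩
      have h2 : u ^ 2 ≤ |u| := by rw [← sq_abs]; nlinarith [abs_nonneg u]
      have h3 : 1 ≤ Real.exp (1 - u ^ 2) := Real.one_le_exp (by linarith)
      have h4 := Real.add_one_le_exp (-u ^ 2)
      have h5 : Real.exp (-u ^ 2) ≤ 1 := Real.exp_le_one_iff.2 (by nlinarith)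
      simp only [k, Set.indicator_of_mem hu, Pi.one_apply]
      rw [abs_of_nonneg (by linarith)]
      nlinarith [abs_nonneg u]
    · have h1 : 1 ≤ |u| := by
        by_contra! hlt
        exact hu ⟨(abs_lt.1 hlt).1, (abs_lt.1 hlt).2.le⟩
      simp only [k, Set.indicator_of_notMem hu, zero_sub, abs_neg, Real.abs_exp]
      have h2 : Real.exp (-u ^ 2) ≤ Real.exp (1 - u ^ 2) := Real.exp_le_exp.2 (by linarith)
      nlinarith [Real.exp_pos (1 - u ^ 2)]
  have hexp : Integrable fun u : ℝ ↦ Real.exp (1 - u ^ 2) * C := by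
    have := ((integrable_exp_neg_mul_sq one_pos).const_mul (Real.exp 1)).mul_const C
    refine this.congr (.of_forall fun u ↦ ?_)
    simp only [← Real.exp_add]; ring_nf
  have hgauss (T : ℝ) (hT : 0 < T) : Integrable fun s ↦ Real.exp (-(T⁻¹ * s) ^ 2) • G s := by
    obtain ⟨B, hB⟩ := (isCompact_Icc (a := (-1 : ℝ)) (b := 1)).exists_bound_of_continuousOn
      hG.continuousOn
    have hbound (s : ℝ) : ‖G s‖ ≤ max B C := by
      rcases le_or_gt |s| 1 with hs | hs
      · exact (hB s (abs_le.1 hs)).trans (le_max_left _ _)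
      · refine le_trans ?_ ((hC s).trans (le_max_right _ _))
        rw [norm_smul, Real.norm_eq_abs]
        exact le_mul_of_one_le_left (norm_nonneg _) hs.le
    refine Integrable.smul_bdd (𝕜 := ℝ) ?_ (max B C) hG.aestronglyMeasurable (.of_forall hbound)
    refine (integrable_exp_neg_mul_sq (b := (T⁻¹) ^ 2) (by positivity)).congr
      (.of_forall fun s ↦ ?_)
    simp only [mul_pow, neg_mul]
  have hlim : Tendsto (fun T : ℝ ↦ ∫ u, k u • T • G (T * u)) atTop (𝓝 (∫ _ : ℝ, (0 : E))) := by
    refine tendsto_integral_filter_of_dominated_convergence _ ?_ ?_ hexp ?_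
    · exact .of_forall fun T ↦ hkm.aestronglyMeasurable.smul
        (Continuous.aestronglyMeasurable (by fun_prop))
    · refine .of_forall fun T ↦ .of_forall fun u ↦ ?_
      calc ‖k u • T • G (T * u)‖ = |k u| * ‖T • G (T * u)‖ := by
            rw [norm_smul, Real.norm_eq_abs]
        _ ≤ |u| * Real.exp (1 - u ^ 2) * ‖T • G (T * u)‖ := by gcongr; exact hk u
        _ = Real.exp (1 - u ^ 2) * ‖(T * u) • G (T * u)‖ := by
            simp only [norm_smul, Real.norm_eq_abs, abs_mul]; ring
        _ ≤ Real.exp (1 - u ^ 2) * C := by gcongr; exact hC _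
    · refine .of_forall fun u ↦ ?_
      rcases eq_or_ne u 0 with rfl | hu
      · simp [k]
      have h1 : Tendsto (fun T : ℝ ↦ T * u) atTop (cocompact ℝ) := by
        rcases hu.lt_or_gt with hu | hu
        · exact (tendsto_id.atTop_mul_const_of_neg hu).mono_right atBot_le_cocompact
        · exact (tendsto_id.atTop_mul_const hu).mono_right atTop_le_cocompact
      have h2 := (hdecay.comp h1).const_smul (k u * u⁻¹)
      rw [smul_zero] at h2
      refine h2.congr fun T ↦ ?_
      simp only [Function.comp_apply, smul_smul]
      congr 1
      field_simp
  rw [integral_zero] at hlim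
  refine hlim.congr' ?_
  filter_upwards [eventually_gt_atTop 0] with T hT
  have hcv := Measure.integral_comp_mul_left (fun s ↦ k (T⁻¹ * s) • G s) T
  rw [abs_of_pos (inv_pos.2 hT)] at hcv
  calc ∫ u, k u • T • G (T * u) = T • ∫ u, k (T⁻¹ * (T * u)) • G (T * u) := by
        rw [← integral_smul]
        congr with u
        rw [smul_comm, inv_mul_cancel_left₀ hT.ne']
    _ = ∫ s, k (T⁻¹ * s) • G s := by rw [hcv, smul_inv_smul₀ hT.ne']
    _ = ∫ s, ((Set.Ioc (-T) T).indicator G s - Real.exp (-(T⁻¹ * s) ^ 2) • G s) := by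
        congr with s
        have : T⁻¹ * s ∈ Set.Ioc (-1 : ℝ) 1 ↔ s ∈ Set.Ioc (-T) T := by
          simp only [Set.mem_Ioc, inv_mul_le_iff₀ hT, lt_inv_mul_iff₀ hT]; simp
        by_cases hs : s ∈ Set.Ioc (-T) T
        · simp [k, Set.indicator_of_mem hs, Set.indicator_of_mem (this.2 hs), sub_smul]
        · simp [k, Set.indicator_of_notMem hs, Set.indicator_of_notMem (this.not.2 hs)]
    _ = _ := by
        rw [integral_sub ?_ (hgauss T hT), integral_indicator measurableSet_Ioc,
          intervalIntegral.integral_of_le (by linarith)]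
        exact (hG.integrableOn_Ioc).integrable_indicator measurableSet_Ioc
end

section
variable {E V : Type*} [NormedAddCommGroup V] [InnerProductSpace ℝ V]
  [MeasurableSpace V] [BorelSpace V] [FiniteDimensional ℝ V]
  [NormedAddCommGroup E] [NormedSpace ℂ E] [CompleteSpace E]
open scoped RealInnerProductSpace Real

/-- The Gaussian means of the inverse Fourier integral of an integrable function converge to the
function at every point of continuity. -/
lemma tendsto_integral_gaussian_smul_fourier {f : V → E}
    (hf : Integrable f) {v : V} (h'f : ContinuousAt f v) :
    Tendsto (fun c : ℝ ↦ ∫ w : V, cexp (-c⁻¹ * ‖w‖ ^ 2 + 2 * π * I * ⟪v, w⟫) • 𝓕 f w)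
      atTop (𝓝 (f v)) := by
  refine (Real.tendsto_integral_gaussian_smul' hf h'f).congr' ?_
  filter_upwards [Ioi_mem_atTop 0] with c (hc : 0 < c)
  have J : Integrable (fun w : V ↦ cexp (- c⁻¹ * ‖w‖ ^ 2 + 2 * π * I * ⟪v, w⟫)) :=
    GaussianFourier.integrable_cexp_neg_mul_sq_norm_add (by simpa) _ _
  have hflip : ∫ w : V, 𝓕 (fun w ↦ cexp (- c⁻¹ * ‖w‖ ^ 2 + 2 * π * I * ⟪v, w⟫)) w • f w =
      ∫ w : V, cexp (-c⁻¹ * ‖w‖ ^ 2 + 2 * π * I * ⟪v, w⟫) • 𝓕 f w := by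
    simpa using! VectorFourier.integral_fourierIntegral_smul_eq_flip (L := innerₗ V)
      Real.continuous_fourierChar continuous_inner J hf
  rw [← hflip]
  congr with w
  rw [fourier_gaussian_innerProductSpace' (by simpa)]
  congr 3
  · simp
  · push_cast; field_simp
end

/-- A primitive of an integrable function is continuous. -/
lemma continuous_of_sub_eq_integral {E : Type*} [NormedAddCommGroup E] [NormedSpace ℝ E]
    {f h : ℝ → E} (hh : Integrable h)
    (hac : ∀ x y : ℝ, x ≤ y → f y - f x = ∫ t in x..y, h t) : Continuous f := by
  have hf : f = fun y ↦ f 0 + ∫ t in (0 : ℝ)..y, h t := by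
    ext y
    rcases le_total 0 y with hy | hy
    · rw [← hac 0 y hy, add_sub_cancel]
    · rw [intervalIntegral.integral_symm, ← hac y 0 hy, neg_sub, add_sub_cancel]
  rw [hf]
  exact continuous_const.add (intervalIntegral.continuous_primitive
    (fun _ _ ↦ hh.intervalIntegrable) 0)

/-- Fourier inversion, as a principal value, for an integrable function that is a primitive of an
integrable function. -/
theorem tendsto_integral_fourierChar_smul_fourier {E : Type*} [NormedAddCommGroup E]
    [NormedSpace ℂ E] [CompleteSpace E] {f h : ℝ → E} (hf : Integrable f) (hh : Integrable h)
    (hac : ∀ x y : ℝ, x ≤ y → f y - f x = ∫ t in x..y, h t) (x : ℝ) :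
    Tendsto (fun T : ℝ ↦ ∫ w in (-T)..T, Real.fourierChar (x * w) • 𝓕 f w) atTop
      (𝓝 (f x)) := by
  have hcont : Continuous (𝓕 f) :=
    VectorFourier.fourierIntegral_continuous Real.continuous_fourierChar continuous_inner hf
  have hG : Continuous fun w : ℝ ↦ Real.fourierChar (x * w) • 𝓕 f w := by fun_prop
  have hdecay : Tendsto (fun w : ℝ ↦ w • Real.fourierChar (x * w) • 𝓕 f w) (cocompact ℝ)
      (𝓝 0) := by
    refine squeeze_zero_norm (fun w ↦ ?_)
      (tendsto_zero_iff_norm_tendsto_zero.1 (Real.zero_at_infty_fourier h))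
    rw [norm_smul, Circle.norm_smul, ← norm_smul]
    exact norm_smul_fourier_le_norm_fourier_of_sub_eq_integral hf hh hac w
  have hgauss := (tendsto_integral_gaussian_smul_fourier hf
    (continuous_of_sub_eq_integral hh hac).continuousAt (v := x)).comp
    (tendsto_pow_atTop (α := ℝ) two_ne_zero)
  have hsum := (tendsto_integral_sub_integral_gaussian hG hdecay).add hgauss
  rw [zero_add] at hsum
  refine hsum.congr fun T ↦ ?_
  rw [sub_add_eq_add_sub, sub_eq_iff_eq_add]
  congr 1
  refine integral_congr_ae (.of_forall fun w ↦ ?_)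
  have hsq : ((‖w‖ : ℝ) : ℂ) ^ 2 = (w : ℂ) ^ 2 := by
    rw [← ofReal_pow, Real.norm_eq_abs, sq_abs, ofReal_pow]
  have hinner : inner ℝ x w = x * w := by simp [mul_comm]
  simp only
  rw [hsq, hinner, Circle.smul_def, ← Complex.coe_smul, smul_smul, Real.fourierChar_apply, ofReal_exp,
    ← Complex.exp_add]
  congr 2
  push_cast
  ring

/-- Fourier inversion for an integrable, absolutely continuous function with
integrable derivative: `f(x) = (1/(2π)) lim_{T→∞} ∫_{-T}^{T} e^{ixs} f̂(s) ds`. -/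
theorem fourier_inversion_absolutely_continuous (f : ℝ → ℝ)
    (hf : MeasureTheory.Integrable f)
    (h : ℝ → ℝ) (hh : MeasureTheory.Integrable h)
    (hac : ∀ x y : ℝ, x ≤ y → f y - f x = ∫ t in x..y, h t)
    (x : ℝ) :
    Filter.Tendsto
      (fun T : ℝ => (1 / (2 * (Real.pi : ℂ))) *
        ∫ s in (-T)..T, Complex.exp (Complex.I * x * s) *
          (∫ t : ℝ, Complex.exp (-(Complex.I * s * t)) * ((f t : ℝ) : ℂ)))
      Filter.atTop
      (nhds ((f x : ℝ) : ℂ)) := by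
  have hac' (a b : ℝ) (hab : a ≤ b) : (f b : ℂ) - f a = ∫ t in a..b, (h t : ℂ) := by
    rw [intervalIntegral.integral_ofReal, ← hac a b hab, ofReal_sub]
  have hpi : (0 : ℝ) < 2 * Real.pi := Real.two_pi_pos
  refine ((tendsto_integral_fourierChar_smul_fourier hf.ofReal hh.ofReal hac' x).comp
    (tendsto_id.atTop_div_const hpi)).congr fun T ↦ ?_
  have hscale := intervalIntegral.inv_smul_integral_comp_div (a := -T) (b := T)
    (fun w : ℝ ↦ Real.fourierChar (x * w) • 𝓕 (fun t ↦ (f t : ℂ)) w) (2 * Real.pi)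
  simp only [Function.comp_apply, id_eq, ← neg_div]
  rw [← hscale, Complex.real_smul]
  congr 1
  · push_cast; rw [one_div]
  refine intervalIntegral.integral_congr fun s _ ↦ ?_
  have hpi' : (Real.pi : ℂ) ≠ 0 := ofReal_ne_zero.2 Real.pi_ne_zero
  simp only [Real.fourier_real_eq, Circle.smul_def, Real.fourierChar_apply, smul_eq_mul]
  congr 2
  · push_cast; field_simp
  · ext t
    congr 2
    push_cast; field_simp
end

section
/- Let −∞ < a < b < ∞ and let f : ℝ → ℝ be measurable, of bounded variation on the compact interval [a,b], Lebesgue integrable on (−∞,a], and Lebesgue integrable on [b,∞). Fix x ∈ (a,b), and let f(x−), f(x+) denote the one-sided limits of f at x (which exist since f is of bounded variation on [a,b]). Then (f(x−)+f(x+))/2 = (1/(2π)) · lim_{T→∞} ∫_{-T}^{T} e^{ixs} ( ∫_a^b e^{-ist} f(t) dt ) ds. -/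
open Filter MeasureTheory Set Topology

/-- The sine integral `Si u = ∫ v in 0..u, sin v / v`. -/
noncomputable def sineIntegral (u : ℝ) : ℝ := ∫ v in (0 : ℝ)..u, Real.sinc v

theorem sineIntegral_neg (u : ℝ) : sineIntegral (-u) = -sineIntegral u := by
  have h := intervalIntegral.integral_comp_neg (a := 0) (b := u) Real.sinc
  simp only [Real.sinc_neg, neg_zero] at h
  rw [sineIntegral, sineIntegral, h, intervalIntegral.integral_symm]

theorem integral_mul_sinc (T x c d : ℝ) :
    ∫ t in c..d, T * Real.sinc (T * (t - x)) =
      sineIntegral (T * (d - x)) - sineIntegral (T * (c - x)) := by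
  have hi (u v : ℝ) : IntervalIntegrable Real.sinc volume u v :=
    Real.continuous_sinc.intervalIntegrable u v
  rw [sineIntegral, sineIntegral, intervalIntegral.integral_interval_sub_left (hi _ _) (hi _ _),
    intervalIntegral.integral_const_mul]
  simp only [mul_sub]
  exact intervalIntegral.mul_integral_comp_mul_sub (f := Real.sinc) T (T * x)

theorem integral_sin_mul_exp_neg_mul (R t : ℝ) :
    ∫ v in (0 : ℝ)..R, Real.sin v * Real.exp (-v * t) =
      (1 + t ^ 2)⁻¹ - Real.exp (-R * t) * ((Real.cos R + t * Real.sin R) / (1 + t ^ 2)) := by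
  have ht : (1 + t ^ 2 : ℝ) ≠ 0 := by positivity
  have hd (v : ℝ) : HasDerivAt
      (fun v => -(Real.exp (-v * t) * ((Real.cos v + t * Real.sin v) / (1 + t ^ 2))))
      (Real.sin v * Real.exp (-v * t)) v := by
    have h1 : HasDerivAt (fun v : ℝ => Real.exp (-v * t)) (Real.exp (-v * t) * (-1 * t)) v :=
      ((hasDerivAt_id v).neg.mul_const t).exp
    have h2 : HasDerivAt (fun v => (Real.cos v + t * Real.sin v) / (1 + t ^ 2))
        ((-Real.sin v + t * Real.cos v) / (1 + t ^ 2)) v :=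
      ((Real.hasDerivAt_cos v).add ((Real.hasDerivAt_sin v).const_mul t)).div_const _
    refine (h1.mul h2).neg.congr_deriv ?_
    field_simp
    ring
  rw [intervalIntegral.integral_eq_sub_of_hasDerivAt (fun v _ => hd v)
    (Continuous.intervalIntegrable (by fun_prop) _ _)]
  simp
  ring

theorem integral_sin_mul_exp_neg_mul_Ioi {v : ℝ} (hv : 0 < v) :
    ∫ t in Ioi (0 : ℝ), Real.sin v * Real.exp (-v * t) = Real.sinc v := by
  rw [integral_const_mul, integral_exp_mul_Ioi (by linarith), Real.sinc_of_ne_zero hv.ne']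
  simp [div_eq_mul_inv]

theorem sineIntegral_eq_integral_Ioi {R : ℝ} (hR : 0 ≤ R) :
    sineIntegral R = ∫ t in Ioi (0 : ℝ), ((1 + t ^ 2)⁻¹ -
      Real.exp (-R * t) * ((Real.cos R + t * Real.sin R) / (1 + t ^ 2))) := by
  simp_rw [← integral_sin_mul_exp_neg_mul]
  rw [← intervalIntegral_integral_swap]
  · rw [sineIntegral]
    simp only [intervalIntegral.integral_of_le hR]
    exact setIntegral_congr_fun measurableSet_Ioc
      fun v hv => (integral_sin_mul_exp_neg_mul_Ioi hv.1).symm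
  · rw [uIoc_of_le hR]
    have hc : Continuous (Function.uncurry fun v t : ℝ => Real.sin v * Real.exp (-v * t)) := by
      fun_prop
    rw [integrable_prod_iff hc.aestronglyMeasurable]
    constructor
    · refine (ae_restrict_iff' measurableSet_Ioc).2 (.of_forall fun v hv => ?_)
      exact (integrableOn_exp_mul_Ioi (neg_lt_zero.2 hv.1) 0).const_mul (Real.sin v)
    · have : IntegrableOn (fun v => |Real.sinc v|) (Ioc 0 R) :=
        (Real.continuous_sinc.abs.integrableOn_Icc).mono_set Ioc_subset_Icc_self
      refine this.congr_fun (fun v hv => ?_) measurableSet_Ioc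
      simp only [Function.uncurry, norm_mul, Real.norm_eq_abs, Real.abs_exp]
      rw [integral_const_mul, integral_exp_mul_Ioi (by linarith [hv.1]),
        Real.sinc_of_ne_zero hv.1.ne', abs_div, abs_of_pos hv.1]
      simp [div_eq_mul_inv]

theorem abs_sineIntegral_sub_pi_div_two_le {R : ℝ} (hR : 0 < R) :
    |sineIntegral R - Real.pi / 2| ≤ 2 / R := by
  have hexp := integrableOn_exp_mul_Ioi (neg_lt_zero.2 hR) 0
  have hbound (t : ℝ) :
      ‖Real.exp (-R * t) * ((Real.cos R + t * Real.sin R) / (1 + t ^ 2))‖ ≤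
        2 * Real.exp (-R * t) := by
    rw [norm_mul, Real.norm_eq_abs, Real.abs_exp, mul_comm]
    gcongr
    have hp : (0 : ℝ) < 1 + t ^ 2 := by positivity
    rw [norm_div, Real.norm_of_nonneg hp.le, div_le_iff₀ hp]
    calc ‖Real.cos R + t * Real.sin R‖ ≤ |Real.cos R| + |t| * |Real.sin R| := by
          simpa [abs_mul] using abs_add_le (Real.cos R) (t * Real.sin R)
      _ ≤ 1 + |t| * 1 := by
          gcongr
          exacts [Real.abs_cos_le_one R, Real.abs_sin_le_one R]
      _ ≤ 2 * (1 + t ^ 2) := by nlinarith [sq_nonneg (|t| - 1), sq_abs t]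
  have hint : IntegrableOn (fun t =>
      Real.exp (-R * t) * ((Real.cos R + t * Real.sin R) / (1 + t ^ 2))) (Ioi 0) :=
    (hexp.const_mul 2).mono' (Measurable.aestronglyMeasurable (by fun_prop)) (.of_forall hbound)
  rw [sineIntegral_eq_integral_Ioi hR.le, integral_sub integrable_inv_one_add_sq.integrableOn hint,
    integral_Ioi_inv_one_add_sq, Real.arctan_zero, sub_zero, sub_sub_cancel_left, abs_neg]
  refine (norm_integral_le_of_norm_le (hexp.const_mul 2) (.of_forall hbound)).trans_eq ?_
  rw [integral_const_mul, integral_exp_mul_Ioi (neg_lt_zero.2 hR)]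
  simp [div_eq_mul_inv]

theorem tendsto_sineIntegral_atTop : Tendsto sineIntegral atTop (𝓝 (Real.pi / 2)) := by
  rw [tendsto_iff_norm_sub_tendsto_zero]
  refine squeeze_zero' (.of_forall fun _ => norm_nonneg _) ?_
    (tendsto_const_nhds (x := (2 : ℝ)).div_atTop tendsto_id)
  filter_upwards [eventually_gt_atTop 0] with R hR
  exact abs_sineIntegral_sub_pi_div_two_le hR

theorem tendsto_sineIntegral_atBot : Tendsto sineIntegral atBot (𝓝 (-(Real.pi / 2))) := by
  have h := (tendsto_sineIntegral_atTop.comp tendsto_neg_atBot_atTop).neg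
  simpa [Function.comp_def, sineIntegral_neg] using h

theorem abs_sineIntegral_le (u : ℝ) : |sineIntegral u| ≤ 4 := by
  wlog hu : 0 ≤ u generalizing u
  · have := this (-u) (by linarith)
    rwa [sineIntegral_neg, abs_neg] at this
  rcases le_or_gt u 1 with h1 | h1
  · have h := intervalIntegral.norm_integral_le_of_norm_le_const (a := 0) (b := u)
      fun v _ => (Real.norm_eq_abs _).trans_le (Real.abs_sinc_le_one v)
    rw [sub_zero, abs_of_nonneg hu, Real.norm_eq_abs] at h
    exact h.trans (by linarith)
  · have h := abs_sineIntegral_sub_pi_div_two_le (by linarith : 0 < u)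
    have h2 : 2 / u ≤ 2 := div_le_self (by norm_num) h1.le
    rw [abs_le] at h ⊢
    constructor <;> linarith [Real.pi_pos, Real.pi_le_four]

theorem integral_ite_of_mem_Icc {a b c : ℝ} (hc : c ∈ Icc a b) {p : ℝ → Prop} [DecidablePred p]
    {k₁ k₂ : ℝ → ℝ} (hk₁ : Continuous k₁) (hk₂ : Continuous k₂)
    (h₁ : ∀ t ∈ Ioo a c, p t) (h₂ : ∀ t ∈ Ioo c b, ¬p t) :
    ∫ t in a..b, (if p t then k₁ t else k₂ t) =
      (∫ t in a..c, k₁ t) + ∫ t in c..b, k₂ t := by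
  have e₁ : (Ioo a c).EqOn k₁ (fun t => if p t then k₁ t else k₂ t) :=
    fun t ht => (if_pos (h₁ t ht)).symm
  have e₂ : (Ioo c b).EqOn k₂ (fun t => if p t then k₁ t else k₂ t) :=
    fun t ht => (if_neg (h₂ t ht)).symm
  rw [intervalIntegral.integral_congr_Ioo_of_le hc.1 e₁,
    intervalIntegral.integral_congr_Ioo_of_le hc.2 e₂,
    intervalIntegral.integral_add_adjacent_intervals]
  · exact (hk₁.intervalIntegrable a c).congr_uIoo (by rwa [uIoo_of_le hc.1])
  · exact (hk₂.intervalIntegrable c b).congr_uIoo (by rwa [uIoo_of_le hc.2])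

theorem Monotone.exists_threshold {g : ℝ → ℝ} (hg : Monotone g) {a b : ℝ} (hab : a ≤ b) (y : ℝ) :
    ∃ c ∈ Icc a b, (∀ t ∈ Ioo a c, g t ≤ y) ∧ ∀ t ∈ Ioo c b, y < g t := by
  set s : Set ℝ := insert a {t ∈ Icc a b | g t ≤ y}
  have hbdd : BddAbove s := ⟨b, by rintro t (rfl | ht); exacts [hab, ht.1.2]⟩
  have hne : s.Nonempty := ⟨a, mem_insert _ _⟩
  refine ⟨sSup s, ⟨le_csSup hbdd (mem_insert _ _), csSup_le hne ?_⟩, fun t ht => ?_, fun t ht => ?_⟩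
  · rintro t (rfl | ht)
    exacts [hab, ht.1.2]
  · obtain ⟨u, hu | hu, htu⟩ := exists_lt_of_lt_csSup hne ht.2
    · exact absurd ht.1 (by linarith)
    · exact (hg htu.le).trans hu.2
  · by_contra! h
    have hat : a ≤ t := (le_csSup hbdd (mem_insert _ _)).trans ht.1.le
    exact ht.1.not_ge (le_csSup hbdd (mem_insert_of_mem _ ⟨⟨hat, ht.2.le⟩, h⟩))

theorem tendsto_sineIntegral_mul_of_pos {r : ℝ} (hr : 0 < r) :
    Tendsto (fun T => sineIntegral (T * r)) atTop (𝓝 (Real.pi / 2)) :=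
  tendsto_sineIntegral_atTop.comp (tendsto_id.atTop_mul_const hr)

theorem tendsto_sineIntegral_mul_of_neg {r : ℝ} (hr : r < 0) :
    Tendsto (fun T => sineIntegral (T * r)) atTop (𝓝 (-(Real.pi / 2))) :=
  tendsto_sineIntegral_atBot.comp (tendsto_id.atTop_mul_const_of_neg hr)

theorem Monotone.exists_integral_superlevel_mul_sinc {g : ℝ → ℝ} (hg : Monotone g) {a b : ℝ}
    (hab : a ≤ b) (x y : ℝ) :
    ∃ c ∈ Icc a b, (∀ t ∈ Ioo a c, g t ≤ y) ∧ (∀ t ∈ Ioo c b, y < g t) ∧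
      ∀ T : ℝ, ∫ t in a..b, (if y < g t then T * Real.sinc (T * (t - x)) else 0) =
        sineIntegral (T * (b - x)) - sineIntegral (T * (c - x)) := by
  obtain ⟨c, hc, h₁, h₂⟩ := hg.exists_threshold hab y
  refine ⟨c, hc, h₁, h₂, fun T => ?_⟩
  have hk : Continuous fun t => T * Real.sinc (T * (t - x)) :=
    continuous_const.mul (Real.continuous_sinc.comp (by fun_prop))
  have h := integral_ite_of_mem_Icc (p := fun t => ¬y < g t) hc continuous_const hk
    (k₁ := fun _ => 0) (fun t ht => (h₁ t ht).not_gt) (fun t ht => not_not.2 (h₂ t ht))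
  simp only [ite_not, intervalIntegral.integral_zero, zero_add] at h
  rw [h, integral_mul_sinc]

theorem Monotone.tendsto_integral_superlevel_mul_sinc {g : ℝ → ℝ} (hg : Monotone g) {a b x : ℝ}
    (hx : x ∈ Ioo a b) {y : ℝ} (hr : y ≠ Function.rightLim g x) :
    Tendsto (fun T : ℝ => ∫ t in a..b, (if y < g t then T * Real.sinc (T * (t - x)) else 0)) atTop
      (𝓝 ((if y < Function.leftLim g x then Real.pi / 2 else 0) +
        if y < Function.rightLim g x then Real.pi / 2 else 0)) := by
  obtain ⟨c, hc, h₁, h₂, hT⟩ :=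
    hg.exists_integral_superlevel_mul_sinc (hx.1.trans hx.2).le x y
  simp only [hT]
  have hb := tendsto_sineIntegral_mul_of_pos (sub_pos.2 hx.2)
  have hlr := hg.leftLim_le_rightLim (le_refl x)
  rcases lt_trichotomy c x with hcx | rfl | hcx
  · have hy : y < Function.leftLim g x := by
      obtain ⟨t, hct, htx⟩ := exists_between hcx
      exact (h₂ t ⟨hct, htx.trans hx.2⟩).trans_le (hg.le_leftLim htx)
    rw [if_pos hy, if_pos (hy.trans_le hlr)]
    simpa using hb.sub (tendsto_sineIntegral_mul_of_neg (sub_neg.2 hcx))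
  · have hly : Function.leftLim g c ≤ y := by
      refine _root_.le_of_tendsto (hg.tendsto_leftLim c) ?_
      filter_upwards [Ioo_mem_nhdsLT hx.1] with t ht using h₁ t ht
    have hyr : y ≤ Function.rightLim g c := by
      refine _root_.ge_of_tendsto (hg.tendsto_rightLim c) ?_
      filter_upwards [Ioo_mem_nhdsGT hx.2] with t ht using (h₂ t ht).le
    rw [if_neg hly.not_gt, if_pos (lt_of_le_of_ne hyr hr), zero_add]
    simpa [sineIntegral] using hb
  · have hy : Function.rightLim g x ≤ y := by
      obtain ⟨t, hxt, htc⟩ := exists_between hcx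
      exact (hg.rightLim_le hxt).trans (h₁ t ⟨hx.1.trans hxt, htc⟩)
    rw [if_neg (hlr.trans hy).not_gt, if_neg hy.not_gt]
    simpa using hb.sub (tendsto_sineIntegral_mul_of_pos (sub_pos.2 hcx))

theorem integral_ite_lt {p q r : ℝ} (hr : r ∈ Icc p q) (k : ℝ) :
    ∫ y in p..q, (if y < r then k else 0) = (r - p) * k := by
  rw [integral_ite_of_mem_Icc (k₁ := fun _ => k) (k₂ := fun _ => 0) hr continuous_const
    continuous_const (fun t ht => ht.2) (fun t ht => ht.1.not_gt)]
  simp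

theorem abs_mul_sinc_le (T u : ℝ) : |T * Real.sinc u| ≤ |T| := by
  rw [abs_mul]
  exact mul_le_of_le_one_right (abs_nonneg T) (Real.abs_sinc_le_one u)

theorem Monotone.integral_mul_sinc_eq {g : ℝ → ℝ} (hg : Monotone g) {a b : ℝ} (hab : a ≤ b)
    (x T : ℝ) :
    ∫ t in a..b, g t * (T * Real.sinc (T * (t - x))) =
      g a * (∫ t in a..b, T * Real.sinc (T * (t - x))) +
        ∫ y in g a..g b, ∫ t in a..b, if y < g t then T * Real.sinc (T * (t - x)) else 0 := by
  have hk : Continuous fun t => T * Real.sinc (T * (t - x)) :=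
    continuous_const.mul (Real.continuous_sinc.comp (by fun_prop))
  have hgK : IntervalIntegrable (fun t => (g t - g a) * (T * Real.sinc (T * (t - x))))
      volume a b :=
    (hg.intervalIntegrable.sub intervalIntegrable_const).mul_continuousOn hk.continuousOn
  have hmeas : Measurable (Function.uncurry fun y t : ℝ =>
      if y < g t then T * Real.sinc (T * (t - x)) else 0) :=
    Measurable.ite (measurableSet_lt measurable_fst (hg.measurable.comp measurable_snd))
      (hk.measurable.comp measurable_snd) measurable_const
  rw [intervalIntegral_intervalIntegral_swap, ← intervalIntegral.integral_const_mul,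
    intervalIntegral.integral_congr (a := a) (b := b)
      (f := fun t => ∫ y in g a..g b, if y < g t then T * Real.sinc (T * (t - x)) else 0)
      (g := fun t => (g t - g a) * (T * Real.sinc (T * (t - x)))),
    ← intervalIntegral.integral_add ((hk.intervalIntegrable a b).const_mul _) hgK]
  · exact intervalIntegral.integral_congr fun t _ => by ring
  · intro t ht
    rw [uIcc_of_le hab] at ht
    exact integral_ite_lt ⟨hg ht.1, hg ht.2⟩ _
  · refine Measure.integrableOn_of_bounded (M := |T|) ?_ hmeas.aestronglyMeasurable ?_
    · rw [Measure.volume_eq_prod, Measure.prod_prod]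
      exact (ENNReal.mul_lt_top (by simp [uIoc]) (by simp [uIoc])).ne
    · refine .of_forall fun z => ?_
      simp only [Function.uncurry]
      split_ifs
      · exact abs_mul_sinc_le _ _
      · simp

theorem Monotone.tendsto_integral_mul_sinc {g : ℝ → ℝ} (hg : Monotone g) {a b x : ℝ}
    (hx : x ∈ Ioo a b) :
    Tendsto (fun T : ℝ => ∫ t in a..b, g t * (T * Real.sinc (T * (t - x)))) atTop
      (𝓝 (Real.pi * ((Function.leftLim g x + Function.rightLim g x) / 2))) := by
  have hab : a ≤ b := (hx.1.trans hx.2).le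
  have hL : Function.leftLim g x ∈ Icc (g a) (g b) :=
    ⟨hg.le_leftLim hx.1, hg.leftLim_le hx.2.le⟩
  have hR : Function.rightLim g x ∈ Icc (g a) (g b) :=
    ⟨hg.le_rightLim hx.1.le, hg.rightLim_le hx.2⟩
  simp only [hg.integral_mul_sinc_eq hab]
  have hK : Tendsto (fun T : ℝ => ∫ t in a..b, T * Real.sinc (T * (t - x))) atTop
      (𝓝 Real.pi) := by
    simp only [integral_mul_sinc]
    simpa using (tendsto_sineIntegral_mul_of_pos (sub_pos.2 hx.2)).sub
      (tendsto_sineIntegral_mul_of_neg (sub_neg.2 hx.1))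
  have hint (r : ℝ) : IntervalIntegrable (fun y => if y < r then Real.pi / 2 else 0)
      volume (g a) (g b) := by
    refine Antitone.intervalIntegrable fun y z hyz => ?_
    split_ifs <;> linarith [Real.pi_pos]
  have hlim : Tendsto (fun T : ℝ => ∫ y in g a..g b, ∫ t in a..b,
      if y < g t then T * Real.sinc (T * (t - x)) else 0) atTop
      (𝓝 (∫ y in g a..g b, ((if y < Function.leftLim g x then Real.pi / 2 else 0) +
        if y < Function.rightLim g x then Real.pi / 2 else 0))) := by
    refine intervalIntegral.tendsto_integral_filter_of_dominated_convergence (fun _ => 8)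
      (.of_forall fun T => ?_) (.of_forall fun T => .of_forall fun y _ => ?_)
      intervalIntegrable_const ?_
    · have hmeas : Measurable (Function.uncurry fun y t : ℝ =>
          if y < g t then T * Real.sinc (T * (t - x)) else 0) :=
        Measurable.ite (measurableSet_lt measurable_fst (hg.measurable.comp measurable_snd))
          (by fun_prop) measurable_const
      simp only [intervalIntegral.integral_of_le hab]
      exact hmeas.stronglyMeasurable.integral_prod_right.aestronglyMeasurable
    · obtain ⟨c, -, -, -, hT⟩ := hg.exists_integral_superlevel_mul_sinc hab x y
      rw [hT, Real.norm_eq_abs]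
      linarith [abs_sub (sineIntegral (T * (b - x))) (sineIntegral (T * (c - x))),
        abs_sineIntegral_le (T * (b - x)), abs_sineIntegral_le (T * (c - x))]
    · filter_upwards [volume.ae_ne (Function.rightLim g x)]
        with y hr _ using hg.tendsto_integral_superlevel_mul_sinc hx hr
  rw [intervalIntegral.integral_add (hint _) (hint _), integral_ite_lt hL, integral_ite_lt hR]
    at hlim
  convert (hK.const_mul (g a)).add hlim using 2
  ring

theorem integral_exp_mul_mul_I_eq_sinc (T u : ℝ) :
    ∫ s in (-T)..T, Complex.exp ((s * u : ℝ) * Complex.I) =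
      2 * ((T * Real.sinc (T * u) : ℝ) : ℂ) := by
  rcases eq_or_ne u 0 with rfl | hu
  · simp [← two_mul]
  · have h := intervalIntegral.integral_comp_mul_right (a := -T) (b := T)
      (fun v : ℝ => Complex.exp (v * Complex.I)) hu
    rw [h, neg_mul, integral_exp_mul_I_eq_sinc, Complex.real_smul]
    have hu' : (u : ℂ) ≠ 0 := by exact_mod_cast hu
    push_cast
    field_simp

theorem integral_exp_mul_integral_exp_eq_sinc {f : ℝ → ℝ} {a b : ℝ}
    (hf : IntervalIntegrable f volume a b) (x T : ℝ) :
    ∫ s in (-T)..T, Complex.exp (Complex.I * x * s) *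
        (∫ t in a..b, Complex.exp (-(Complex.I * s * t)) * ((f t : ℝ) : ℂ)) =
      2 * ((∫ t in a..b, f t * (T * Real.sinc (T * (t - x))) : ℝ) : ℂ) := by
  have hpt (s t : ℝ) : Complex.exp (Complex.I * x * s) *
      (Complex.exp (-(Complex.I * s * t)) * (f t : ℂ)) =
      Complex.exp ((s * (x - t) : ℝ) * Complex.I) * (f t : ℂ) := by
    rw [← mul_assoc, ← Complex.exp_add]
    congr 2
    push_cast
    ring
  simp only [← intervalIntegral.integral_const_mul, hpt]
  rw [intervalIntegral_intervalIntegral_swap]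
  · rw [← intervalIntegral.integral_ofReal, ← intervalIntegral.integral_const_mul]
    refine intervalIntegral.integral_congr fun t _ => ?_
    rw [intervalIntegral.integral_mul_const, integral_exp_mul_mul_I_eq_sinc, ← neg_sub t x,
      mul_neg, Real.sinc_neg]
    push_cast
    ring
  · rw [IntegrableOn, Measure.volume_eq_prod, ← Measure.prod_restrict]
    have hf' : Integrable (fun t => (f t : ℂ)) (volume.restrict (uIoc a b)) :=
      (intervalIntegrable_iff.1 hf).ofReal
    have : IsFiniteMeasure (volume.restrict (uIoc (-T) T)) :=
      inferInstanceAs (IsFiniteMeasure (volume.restrict (Ioc _ _)))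
    exact (hf'.comp_snd (volume.restrict (uIoc (-T) T))).bdd_mul (c := 1)
      (Continuous.aestronglyMeasurable (by fun_prop))
      (.of_forall fun z => (Complex.norm_exp_ofReal_mul_I _).le)

theorem BoundedVariationOn.exists_monotone_eqOn_sub {f : ℝ → ℝ} {a b : ℝ} (hab : a ≤ b)
    (hf : BoundedVariationOn f (Icc a b)) :
    ∃ p q : ℝ → ℝ, Monotone p ∧ Monotone q ∧ EqOn f (p - q) (Icc a b) := by
  obtain ⟨p, q, hp, hq, rfl⟩ :=
    hf.locallyBoundedVariationOn.exists_monotoneOn_sub_monotoneOn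
  have hext {r : ℝ → ℝ} (hr : MonotoneOn r (Icc a b)) :
      Monotone (IccExtend hab fun t : Icc a b => r t) :=
    Monotone.IccExtend hab fun s t hst => hr s.2 t.2 hst
  refine ⟨_, _, hext hp, hext hq, fun t ht => ?_⟩
  simp [IccExtend_of_mem hab _ ht]

/-- Local Fourier inversion: `f` of bounded variation on `[a,b]`, Lebesgue integrable on
`(-∞,a]` and `[b,∞)`.  For `x ∈ (a,b)`,
`(f(x-)+f(x+))/2 = (1/(2π)) lim_{T→∞} ∫_{-T}^{T} e^{ixs} (∫_a^b e^{-ist} f(t) dt) ds`. -/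
theorem fourier_inversion_local_BV (a b : ℝ) (hab : a < b) (f : ℝ → ℝ)
    (hmeas : Measurable f)
    (hbv : BoundedVariationOn f (Set.Icc a b))
    (hint1 : MeasureTheory.IntegrableOn f (Set.Iic a))
    (hint2 : MeasureTheory.IntegrableOn f (Set.Ici b))
    (x : ℝ) (hx : x ∈ Set.Ioo a b) (fl fr : ℝ)
    (hfl : Filter.Tendsto f (nhdsWithin x (Set.Iio x)) (nhds fl))
    (hfr : Filter.Tendsto f (nhdsWithin x (Set.Ioi x)) (nhds fr)) :
    Filter.Tendsto
      (fun T : ℝ => (1 / (2 * (Real.pi : ℂ))) *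
        ∫ s in (-T)..T, Complex.exp (Complex.I * x * s) *
          (∫ t in a..b, Complex.exp (-(Complex.I * s * t)) * ((f t : ℝ) : ℂ)))
      Filter.atTop
      (nhds (((fl + fr) / 2 : ℝ) : ℂ)) := by
  obtain ⟨p, q, hp, hq, hfpq⟩ := hbv.exists_monotone_eqOn_sub hab.le
  have hleft : fl = Function.leftLim p x - Function.leftLim q x := by
    refine tendsto_nhds_unique hfl
      (((hp.tendsto_leftLim x).sub (hq.tendsto_leftLim x)).congr' ?_)
    filter_upwards [Ioo_mem_nhdsLT hx.1] with t ht
    exact (hfpq ⟨ht.1.le, (ht.2.trans hx.2).le⟩).symm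
  have hright : fr = Function.rightLim p x - Function.rightLim q x := by
    refine tendsto_nhds_unique hfr
      (((hp.tendsto_rightLim x).sub (hq.tendsto_rightLim x)).congr' ?_)
    filter_upwards [Ioo_mem_nhdsGT hx.2] with t ht
    exact (hfpq ⟨(hx.1.trans ht.1).le, ht.2.le⟩).symm
  have hf : IntervalIntegrable f volume a b := by
    refine (hp.intervalIntegrable.sub hq.intervalIntegrable).congr fun t ht => ?_
    rw [uIoc_of_le hab.le] at ht
    exact (hfpq (Ioc_subset_Icc_self ht)).symm
  have hsplit (T : ℝ) : ∫ t in a..b, f t * (T * Real.sinc (T * (t - x))) =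
      (∫ t in a..b, p t * (T * Real.sinc (T * (t - x)))) -
        ∫ t in a..b, q t * (T * Real.sinc (T * (t - x))) := by
    have hk : ContinuousOn (fun t => T * Real.sinc (T * (t - x))) (uIcc a b) :=
      (continuous_const.mul (Real.continuous_sinc.comp (by fun_prop))).continuousOn
    rw [← intervalIntegral.integral_sub (hp.intervalIntegrable.mul_continuousOn hk)
      (hq.intervalIntegrable.mul_continuousOn hk)]
    refine intervalIntegral.integral_congr fun t ht => ?_
    rw [uIcc_of_le hab.le] at ht
    simp only [hfpq ht, Pi.sub_apply, sub_mul]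
  have hlim : Tendsto (fun T : ℝ => Real.pi⁻¹ * ∫ t in a..b, f t * (T * Real.sinc (T * (t - x))))
      atTop (𝓝 ((fl + fr) / 2)) := by
    simp only [hsplit]
    convert ((hp.tendsto_integral_mul_sinc hx).sub (hq.tendsto_integral_mul_sinc hx)).const_mul
      Real.pi⁻¹ using 2
    rw [hleft, hright]
    field_simp
    ring
  refine ((Complex.continuous_ofReal.tendsto _).comp hlim).congr fun T => ?_
  rw [integral_exp_mul_integral_exp_eq_sinc hf]
  have hpi : (Real.pi : ℂ) ≠ 0 := by exact_mod_cast Real.pi_ne_zero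
  rw [Function.comp_apply, Complex.ofReal_mul, Complex.ofReal_inv, ← mul_assoc]
  congr 1
  field_simp
end

section
/- Let f : ℝ → ℝ be of bounded variation on the half line [b,∞) with lim_{t→∞} f(t) = 0, and Lebesgue measurable. Fix x < b. For each s ≠ 0 let F(s) = lim_{Y→∞} ∫_b^Y e^{-ist} f(t) dt (which exists). Then lim_{T→∞, S→0⁺} ∫_{S<|s|<T} e^{ixs} F(s) ds = 0, where the double limit means: for every ε > 0 there exist M > 0 and η > 0 such that the modulus of the integral over {s : S < |s| < T} is less than ε whenever T > M and 0 < S < η. -/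
open MeasureTheory Set Filter Topology

/-- A function of bounded variation on a half-line which vanishes at infinity is there a difference
of two antitone functions vanishing at infinity. -/
theorem BoundedVariationOn.exists_antitone_sub_antitone_tendsto_zero {f : ℝ → ℝ} {b : ℝ}
    (hbv : BoundedVariationOn f (Ici b)) (htop : Tendsto f atTop (𝓝 0)) :
    ∃ p q : ℝ → ℝ, Antitone p ∧ Antitone q ∧ Tendsto p atTop (𝓝 0) ∧ Tendsto q atTop (𝓝 0) ∧
      ∀ t, b ≤ t → f t = p t - q t := by
  have hb : b ∈ Ici b := self_mem_Ici
  set v : ℝ → ℝ := fun t => variationOnFromTo f (Ici b) b (max b t) with hv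
  have hmem : ∀ t, max b t ∈ Ici b := fun t => le_max_left b t
  have hmono : Monotone v := fun s t hst =>
    variationOnFromTo.monotoneOn hbv.locallyBoundedVariationOn hb (hmem s) (hmem t)
      (max_le_max le_rfl hst)
  have hbdd : BddAbove (range v) := by
    refine ⟨(eVariationOn f (Ici b)).toReal, ?_⟩
    rintro _ ⟨t, rfl⟩
    exact (le_abs_self _).trans (variationOnFromTo.abs_le_eVariationOn hbv)
  have hlim := tendsto_atTop_ciSup hmono hbdd
  set L := ⨆ t, v t
  have hfmax : Tendsto (fun t => f (max b t)) atTop (𝓝 0) :=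
    htop.comp (tendsto_atTop_mono (fun t => le_max_right b t) tendsto_id)
  refine ⟨fun t => L - v t + f (max b t), fun t => L - v t, ?_, ?_, ?_, ?_, ?_⟩
  · intro s t hst
    have := variationOnFromTo.sub_self_monotoneOn hbv.locallyBoundedVariationOn hb
      (hmem s) (hmem t) (max_le_max le_rfl hst)
    simp only [Pi.sub_apply] at this
    simp only [hv]
    linarith
  · intro s t hst
    have := hmono hst
    simp only
    linarith
  · simpa using (hlim.const_sub L).add hfmax
  · simpa using hlim.const_sub L
  · intro t ht
    simp [max_eq_right ht]

/-- Second mean value inequality for a globally antitone weight. -/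
theorem Antitone.norm_intervalIntegral_smul_le {E : Type*} [NormedAddCommGroup E] [NormedSpace ℝ E]
    [CompleteSpace E] {g : ℝ → ℝ} {h : ℝ → E} {a Y K : ℝ} (haY : a ≤ Y) (hg : Antitone g)
    (hgY : 0 ≤ g Y) (hh : IntervalIntegrable h volume a Y)
    (hK : ∀ c ∈ Icc a Y, ‖∫ t in a..c, h t‖ ≤ K) :
    ‖∫ t in a..Y, g t • h t‖ ≤ g a * K := by
  have hga : 0 ≤ g a := hgY.trans (hg haY)
  have hswap : ∫ t in a..Y, g t • h t
      = ∫ u in (0 : ℝ)..g a, ∫ t in a..Y, {t | u < g t}.indicator h t := by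
    rw [← intervalIntegral_intervalIntegral_swap
      (F := fun t u => {t | u < g t}.indicator h t)]
    · refine intervalIntegral.integral_congr fun t ht => ?_
      rw [uIcc_of_le haY] at ht
      have hgt : 0 ≤ g t := hgY.trans (hg ht.2)
      have hind : (fun u => {t | u < g t}.indicator h t)
          = (Iio (g t)).indicator fun _ => h t := by
        ext u
        simp [indicator]
      have hset : Ioc 0 (g a) ∩ Iio (g t) = Ioo 0 (g t) := by
        ext u
        have := hg ht.1
        simp only [mem_inter_iff, mem_Ioc, mem_Iio, mem_Ioo]
        constructor
        · rintro ⟨⟨h1, _⟩, h2⟩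
          exact ⟨h1, h2⟩
        · rintro ⟨h1, h2⟩
          exact ⟨⟨h1, by linarith⟩, h2⟩
      change g t • h t = ∫ u in (0 : ℝ)..g a, {t | u < g t}.indicator h t
      rw [hind, intervalIntegral.integral_of_le hga, setIntegral_indicator measurableSet_Iio, hset,
        setIntegral_const, Real.volume_real_Ioo_of_le hgt, sub_zero]
    · have hmeas : MeasurableSet {p : ℝ × ℝ | p.2 < g p.1} :=
        measurableSet_lt measurable_snd (hg.measurable.comp measurable_fst)
      have hfun : Function.uncurry (fun t u => {t | u < g t}.indicator h t)
          = {p : ℝ × ℝ | p.2 < g p.1}.indicator fun p => h p.1 := by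
        ext p
        simp [Function.uncurry, indicator]
      rw [hfun]
      refine Integrable.indicator ?_ hmeas
      rw [Measure.volume_eq_prod, ← Measure.prod_restrict]
      have : IsFiniteMeasure (volume.restrict (uIoc 0 (g a))) := by
        rw [uIoc_of_le hga]
        infer_instance
      exact Integrable.comp_fst (intervalIntegrable_iff.1 hh) _
  have hinner : ∀ u ∈ uIoc 0 (g a), ‖∫ t in a..Y, {t | u < g t}.indicator h t‖ ≤ K := by
    intro u _
    have hms : MeasurableSet {t | u < g t} := measurableSet_lt measurable_const hg.measurable
    rw [intervalIntegral.integral_of_le haY, setIntegral_indicator hms]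
    set D := Ioc a Y ∩ {t | u < g t} with hD
    rcases D.eq_empty_or_nonempty with hempty | hne
    · rw [hempty]
      simpa using hK a ⟨le_rfl, haY⟩
    · have hbdd : BddAbove D := ⟨Y, fun t ht => ht.1.2⟩
      obtain ⟨t₀, ht₀⟩ := hne
      have hac : a ≤ sSup D := ht₀.1.1.le.trans (le_csSup hbdd ht₀)
      have hcY : sSup D ≤ Y := csSup_le ⟨t₀, ht₀⟩ fun t ht => ht.1.2
      have hsub : D ⊆ Ioc a (sSup D) := fun t ht => ⟨ht.1.1, le_csSup hbdd ht⟩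
      have hsup : Ioo a (sSup D) ⊆ D := by
        intro t ht
        obtain ⟨r, hr, htr⟩ := exists_lt_of_lt_csSup ⟨t₀, ht₀⟩ ht.2
        exact ⟨⟨ht.1, htr.le.trans hr.1.2⟩, lt_of_lt_of_le hr.2 (hg htr.le)⟩
      have hae : D =ᵐ[volume] Ioc a (sSup D) :=
        hsub.eventuallyLE.antisymm (Ioo_ae_eq_Ioc.symm.le.trans hsup.eventuallyLE)
      rw [setIntegral_congr_set hae, ← intervalIntegral.integral_of_le hac]
      exact hK _ ⟨hac, hcY⟩
  rw [hswap]
  refine (intervalIntegral.norm_integral_le_of_norm_le_const hinner).trans_eq ?_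
  rw [sub_zero, abs_of_nonneg hga, mul_comm]

/-- Second mean value inequality: integrating against a nonnegative antitone weight costs at most
the initial value of the weight times a bound on the primitives of the other factor. -/
theorem AntitoneOn.norm_intervalIntegral_smul_le {E : Type*} [NormedAddCommGroup E]
    [NormedSpace ℝ E] [CompleteSpace E] {g : ℝ → ℝ} {h : ℝ → E} {a Y K : ℝ} (haY : a ≤ Y)
    (hg : AntitoneOn g (Icc a Y)) (hgY : 0 ≤ g Y) (hh : IntervalIntegrable h volume a Y)
    (hK : ∀ c ∈ Icc a Y, ‖∫ t in a..c, h t‖ ≤ K) :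
    ‖∫ t in a..Y, g t • h t‖ ≤ g a * K := by
  have hanti : Antitone (IccExtend haY fun t : Icc a Y => g t) :=
    fun s t hst => hg (projIcc a Y haY s).2 (projIcc a Y haY t).2 (monotone_projIcc haY hst)
  have hext : ∀ t ∈ Icc a Y, IccExtend haY (fun t : Icc a Y => g t) t = g t :=
    fun t ht => IccExtend_of_mem haY _ ht
  have key := hanti.norm_intervalIntegral_smul_le haY
    (by rwa [hext Y ⟨haY, le_rfl⟩]) hh hK
  rw [hext a ⟨le_rfl, haY⟩] at key
  convert key using 2
  refine intervalIntegral.integral_congr fun t ht => ?_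
  rw [uIcc_of_le haY] at ht
  simp only [hext t ht]

theorem norm_intervalIntegral_exp_le {s : ℝ} (hs : s ≠ 0) (c d : ℝ) :
    ‖∫ t in c..d, Complex.exp (-(Complex.I * s * t))‖ ≤ 2 / |s| := by
  have hne : -(Complex.I * s) ≠ 0 := by simpa using hs
  have hnorm : ∀ t : ℝ, ‖Complex.exp (-(Complex.I * s) * t)‖ = 1 := fun t => by
    simp [Complex.norm_exp]
  simp_rw [← neg_mul]
  simp_rw [neg_mul _ (s : ℂ)]
  rw [integral_exp_mul_complex hne, norm_div]
  have hden : ‖-(Complex.I * (s : ℂ))‖ = |s| := by simp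
  rw [hden]
  gcongr
  refine (norm_sub_le _ _).trans ?_
  rw [hnorm, hnorm]
  norm_num

theorem abs_intervalIntegral_sin_le {R : ℝ} (hR : 0 < R) (x c d : ℝ) :
    |∫ t in c..d, Real.sin (R * (t - x))| ≤ 2 / R := by
  have hval : ∫ t in c..d, Real.sin (R * (t - x))
      = R⁻¹ * (Real.cos (R * c - R * x) - Real.cos (R * d - R * x)) := by
    simp_rw [mul_sub R]
    rw [intervalIntegral.integral_comp_mul_sub (fun y => Real.sin y) hR.ne', integral_sin,
      smul_eq_mul, mul_sub]
  rw [hval, abs_mul, abs_of_pos (inv_pos.2 hR), div_eq_inv_mul]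
  gcongr
  have h1 := Real.cos_le_one (R * c - R * x)
  have h2 := Real.cos_le_one (R * d - R * x)
  have h3 := Real.neg_one_le_cos (R * c - R * x)
  have h4 := Real.neg_one_le_cos (R * d - R * x)
  rw [abs_le]
  constructor <;> linarith

/-- The Dirichlet-type kernel `sin (R v) / v` against an antitone weight, far from the origin. -/
theorem Antitone.abs_intervalIntegral_mul_sin_div_le {g : ℝ → ℝ} (hg : Antitone g)
    (hg0 : ∀ t, 0 ≤ g t) {x c d R : ℝ} (hxc : x < c) (hcd : c ≤ d) (hR : 0 < R) :
    |∫ t in c..d, g t * (Real.sin (R * (t - x)) / (t - x))| ≤ g c / (c - x) * (2 / R) := by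
  have hanti : AntitoneOn (fun t => g t / (t - x)) (Icc c d) := by
    intro s hs t _ hst
    have h1 : 0 < s - x := by linarith [hs.1]
    exact div_le_div₀ (hg0 s) (hg hst) h1 (by linarith)
  have key := hanti.norm_intervalIntegral_smul_le hcd (div_nonneg (hg0 d) (by linarith))
    (h := fun t => Real.sin (R * (t - x))) (Continuous.intervalIntegrable (by fun_prop) _ _)
    (fun e _ => abs_intervalIntegral_sin_le hR x c e)
  simpa only [Real.norm_eq_abs, smul_eq_mul, div_mul_eq_mul_div, mul_div_assoc] using key

/-- The Dirichlet-type kernel `sin (R v) / v` against an antitone weight, on a bounded interval. -/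
theorem Antitone.abs_intervalIntegral_mul_sin_div_le_mul {g : ℝ → ℝ} (hg : Antitone g)
    (hg0 : ∀ t, 0 ≤ g t) {x c d R : ℝ} (hxc : x < c) (hcd : c ≤ d) (hR : 0 < R) :
    |∫ t in c..d, g t * (Real.sin (R * (t - x)) / (t - x))| ≤ g c * R * (d - c) := by
  refine (intervalIntegral.norm_integral_le_of_norm_le_const (E := ℝ) (C := g c * R)
    fun t ht => ?_).trans_eq (by rw [abs_of_nonneg (sub_nonneg.2 hcd)])
  rw [uIoc_of_le hcd] at ht
  have hv : 0 < t - x := by linarith [ht.1]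
  rw [Real.norm_eq_abs, abs_mul, abs_of_nonneg (hg0 t), abs_div, abs_of_pos hv]
  refine mul_le_mul (hg ht.1.le) ?_ (by positivity) (hg0 c)
  rw [div_le_iff₀ hv]
  exact Real.abs_sin_le_abs.trans_eq (abs_of_pos (mul_pos hR hv))

theorem intervalIntegrable_mul_sin_div {g : ℝ → ℝ} {x c d : ℝ} (hxc : x < c) (hxd : x < d)
    (hg : IntervalIntegrable g volume c d) (R : ℝ) :
    IntervalIntegrable (fun t => g t * (Real.sin (R * (t - x)) / (t - x))) volume c d := by
  refine hg.mul_continuousOn ?_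
  refine ContinuousOn.div (by fun_prop) (by fun_prop) fun t ht => ?_
  have : x < t := (lt_min hxc hxd).trans_le ht.1
  exact (sub_pos.2 this).ne'

theorem Antitone.eventually_atTop_abs_intervalIntegral_mul_sin_div_le {g : ℝ → ℝ}
    (hg : Antitone g) (hg0 : ∀ t, 0 ≤ g t) {x b : ℝ} (hxb : x < b) {ε : ℝ} (hε : 0 < ε) :
    ∀ᶠ R in atTop, ∀ Y, b ≤ Y →
      |∫ t in b..Y, g t * (Real.sin (R * (t - x)) / (t - x))| ≤ ε := by
  have hlim : Tendsto (fun R : ℝ => g b / (b - x) * (2 / R)) atTop (𝓝 0) := by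
    simpa using (tendsto_id.const_div_atTop (2 : ℝ)).const_mul (g b / (b - x))
  filter_upwards [hlim.eventually_le_const hε, eventually_gt_atTop 0] with R hR hR0 Y hY
  exact (hg.abs_intervalIntegral_mul_sin_div_le hg0 hxb hY hR0).trans hR

theorem Antitone.eventually_nhdsGT_abs_intervalIntegral_mul_sin_div_le {g : ℝ → ℝ}
    (hg : Antitone g) (hlim : Tendsto g atTop (𝓝 0)) {x b : ℝ} (hxb : x < b) {ε : ℝ}
    (hε : 0 < ε) :
    ∀ᶠ R in 𝓝[>] (0 : ℝ), ∀ Y, b ≤ Y →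
      |∫ t in b..Y, g t * (Real.sin (R * (t - x)) / (t - x))| ≤ ε := by
  have hg0 : ∀ t, 0 ≤ g t := fun t => hg.le_of_tendsto hlim t
  obtain ⟨B, hBε, hbB⟩ := ((hlim.eventually_le_const (by positivity : 0 < ε / 6)).and
    (eventually_ge_atTop b)).exists
  have hxB : x < B := hxb.trans_le hbB
  have hsmall : Tendsto (fun R : ℝ => g b * R * (B - b)) (𝓝[>] 0) (𝓝 0) := by
    have : Continuous fun R : ℝ => g b * R * (B - b) := by fun_prop
    simpa using (this.tendsto 0).mono_left nhdsWithin_le_nhds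
  filter_upwards [hsmall.eventually_le_const (by positivity : 0 < ε / 2), self_mem_nhdsWithin,
    tendsto_inv_nhdsGT_zero.eventually (eventually_ge_atTop (B - x))] with R hRε hR hRB Y hY
  have hR : 0 < R := hR
  have hii : ∀ c d, x < c → x < d →
      IntervalIntegrable (fun t => g t * (Real.sin (R * (t - x)) / (t - x))) volume c d :=
    fun c d hc hd => intervalIntegrable_mul_sin_div hc hd hg.intervalIntegrable R
  have hhead : ∀ Y, b ≤ Y → Y ≤ B →
      |∫ t in b..Y, g t * (Real.sin (R * (t - x)) / (t - x))| ≤ ε / 2 := by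
    intro Y hbY hYB
    refine (hg.abs_intervalIntegral_mul_sin_div_le_mul hg0 hxb hbY hR).trans (le_trans ?_ hRε)
    have := hg0 b
    gcongr
  have hmid : ∀ Y, B ≤ Y → Y ≤ x + R⁻¹ →
      |∫ t in B..Y, g t * (Real.sin (R * (t - x)) / (t - x))| ≤ ε / 6 := by
    intro Y hBY hYA
    refine (hg.abs_intervalIntegral_mul_sin_div_le_mul hg0 hxB hBY hR).trans (le_trans ?_ hBε)
    rw [mul_assoc]
    refine mul_le_of_le_one_right (hg0 B) ?_
    calc R * (Y - B) ≤ R * R⁻¹ := by gcongr; linarith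
      _ = 1 := mul_inv_cancel₀ hR.ne'
  have htail : ∀ Y, x + R⁻¹ ≤ Y →
      |∫ t in (x + R⁻¹)..Y, g t * (Real.sin (R * (t - x)) / (t - x))| ≤ ε / 3 := by
    intro Y hAY
    have hxA : x < x + R⁻¹ := by linarith [inv_pos.2 hR]
    refine (hg.abs_intervalIntegral_mul_sin_div_le hg0 hxA hAY hR).trans ?_
    have h1 : g (x + R⁻¹) / (x + R⁻¹ - x) * (2 / R) = 2 * g (x + R⁻¹) := by
      rw [add_sub_cancel_left]
      field_simp
    have h2 : g (x + R⁻¹) ≤ g B := hg (by linarith)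
    linarith
  rcases le_total Y B with hYB | hBY
  · linarith [hhead Y hY hYB]
  rw [← intervalIntegral.integral_add_adjacent_intervals (hii b B hxb hxB)
    (hii B Y hxB (hxB.trans_le hBY))]
  refine (abs_add_le _ _).trans ?_
  have hB := hhead B hbB le_rfl
  rcases le_total Y (x + R⁻¹) with hYA | hAY
  · linarith [hmid Y hBY hYA]
  have hxA : x < x + R⁻¹ := by linarith [inv_pos.2 hR]
  rw [← intervalIntegral.integral_add_adjacent_intervals (hii B (x + R⁻¹) hxB hxA)
    (hii (x + R⁻¹) Y hxA (hxA.trans_le hAY))]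
  have := abs_add_le (∫ t in B..(x + R⁻¹), g t * (Real.sin (R * (t - x)) / (t - x)))
    (∫ t in (x + R⁻¹)..Y, g t * (Real.sin (R * (t - x)) / (t - x)))
  linarith [hmid (x + R⁻¹) (by linarith) le_rfl, htail Y hAY]

theorem Antitone.norm_intervalIntegral_exp_mul_le {g : ℝ → ℝ} (hg : Antitone g)
    (hg0 : ∀ t, 0 ≤ g t) {b Y s : ℝ} (hY : b ≤ Y) (hs : s ≠ 0) :
    ‖∫ t in b..Y, Complex.exp (-(Complex.I * s * t)) * (g t : ℂ)‖ ≤ g b * (2 / |s|) := by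
  have key := (hg.antitoneOn (Icc b Y)).norm_intervalIntegral_smul_le hY (hg0 Y)
    (h := fun t : ℝ => Complex.exp (-(Complex.I * s * t)))
    (Continuous.intervalIntegrable (by fun_prop) _ _)
    (fun e _ => norm_intervalIntegral_exp_le hs b e)
  simpa only [Complex.real_smul, mul_comm] using key

/-- Truncated Fourier inversion as an integral against the kernel `∫ exp (-i s (t - x)) ds`. -/
theorem intervalIntegral_exp_mul_fourier_swap {f : ℝ → ℝ} {b Y : ℝ}
    (hf : IntervalIntegrable f volume b Y) (x A B : ℝ) :
    ∫ s in A..B, Complex.exp (Complex.I * x * s) *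
        ∫ t in b..Y, Complex.exp (-(Complex.I * s * t)) * (f t : ℂ)
      = ∫ t in b..Y, (f t : ℂ) * ∫ s in A..B, Complex.exp (-(Complex.I * (t - x)) * s) := by
  have hpt : ∀ s t : ℝ, Complex.exp (Complex.I * x * s) *
      (Complex.exp (-(Complex.I * s * t)) * (f t : ℂ))
      = (f t : ℂ) * Complex.exp (-(Complex.I * (t - x)) * s) := by
    intro s t
    rw [← mul_assoc, ← Complex.exp_add, mul_comm]
    ring_nf
  simp_rw [← intervalIntegral.integral_const_mul, hpt]
  refine intervalIntegral_intervalIntegral_swap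
    (F := fun s t : ℝ => (f t : ℂ) * Complex.exp (-(Complex.I * (t - x)) * s)) ?_
  have : IsFiniteMeasure (volume.restrict (uIoc A B)) := by
    rw [uIoc]
    infer_instance
  have hsnd : IntegrableOn (fun p : ℝ × ℝ => (f p.2 : ℂ)) (uIoc A B ×ˢ uIoc b Y) := by
    rw [IntegrableOn, Measure.volume_eq_prod, ← Measure.prod_restrict]
    exact Integrable.comp_snd (f := fun t => (f t : ℂ)) (intervalIntegrable_iff.1 hf).ofReal _
  refine Integrable.mul_bdd (c := 1) hsnd (Continuous.aestronglyMeasurable (by fun_prop)) ?_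
  refine Eventually.of_forall fun p => ?_
  simp [Complex.norm_exp]

theorem intervalIntegral_exp_symm_eq_sin {v : ℝ} (hv : v ≠ 0) (S T : ℝ) :
    (∫ s in (-T)..(-S), Complex.exp (-(Complex.I * v) * s)) +
        ∫ s in S..T, Complex.exp (-(Complex.I * v) * s)
      = ((2 * (Real.sin (T * v) / v - Real.sin (S * v) / v) : ℝ) : ℂ) := by
  have hne : -(Complex.I * (v : ℂ)) ≠ 0 := by simpa using hv
  have hv' : (v : ℂ) ≠ 0 := by exact_mod_cast hv
  rw [integral_exp_mul_complex hne, integral_exp_mul_complex hne]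
  push_cast
  rw [Complex.sin, Complex.sin]
  have e : ∀ r : ℂ, -(Complex.I * v) * (-r) = r * v * Complex.I := fun r => by ring
  have e' : ∀ r : ℂ, -(Complex.I * v) * r = -(r * v) * Complex.I := fun r => by ring
  rw [e, e, e', e']
  field_simp
  ring_nf
  simp only [Complex.I_sq]
  ring

theorem intervalIntegral_exp_mul_fourier_symm_eq {f : ℝ → ℝ} {b x Y : ℝ}
    (hf : IntervalIntegrable f volume b Y) (hxb : x < b) (hbY : b ≤ Y) (S T : ℝ) :
    (∫ s in (-T)..(-S), Complex.exp (Complex.I * x * s) *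
        ∫ t in b..Y, Complex.exp (-(Complex.I * s * t)) * (f t : ℂ)) +
      (∫ s in S..T, Complex.exp (Complex.I * x * s) *
        ∫ t in b..Y, Complex.exp (-(Complex.I * s * t)) * (f t : ℂ))
      = ((2 * ((∫ t in b..Y, f t * (Real.sin (T * (t - x)) / (t - x))) -
          ∫ t in b..Y, f t * (Real.sin (S * (t - x)) / (t - x))) : ℝ) : ℂ) := by
  have hint : ∀ A B : ℝ, IntervalIntegrable (fun t : ℝ => (f t : ℂ) *
      ∫ s in A..B, Complex.exp (-(Complex.I * (t - x)) * s)) volume b Y := by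
    intro A B
    refine IntervalIntegrable.mul_continuousOn
      (f := fun t : ℝ => (f t : ℂ)) ⟨hf.1.ofReal, hf.2.ofReal⟩ ?_
    refine Continuous.continuousOn ?_
    exact intervalIntegral.continuous_parametric_intervalIntegral_of_continuous'
      (f := fun t s : ℝ => Complex.exp (-(Complex.I * (t - x)) * s)) (by fun_prop) A B
  have hxY := hxb.trans_le hbY
  rw [intervalIntegral_exp_mul_fourier_swap hf, intervalIntegral_exp_mul_fourier_swap hf,
    ← intervalIntegral.integral_add (hint _ _) (hint _ _),
    ← intervalIntegral.integral_sub (intervalIntegrable_mul_sin_div hxb hxY hf T)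
      (intervalIntegrable_mul_sin_div hxb hxY hf S),
    ← intervalIntegral.integral_const_mul, ← intervalIntegral.integral_ofReal]
  refine intervalIntegral.integral_congr fun t ht => ?_
  rw [uIcc_of_le hbY] at ht
  have hv : t - x ≠ 0 := (sub_pos.2 (hxb.trans_le ht.1)).ne'
  have key := intervalIntegral_exp_symm_eq_sin hv S T
  rw [Complex.ofReal_sub] at key
  rw [← mul_add, key, ← Complex.ofReal_mul]
  congr 1
  ring

/-- Dominated convergence for the truncated transforms away from the origin. -/
theorem tendsto_intervalIntegral_exp_mul_of_norm_le {Φ : ℝ → ℝ → ℂ} {F : ℝ → ℂ} {b C : ℝ}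
    (hcont : ∀ Y, b ≤ Y → Continuous (Φ Y))
    (hbound : ∀ Y, b ≤ Y → ∀ s, s ≠ 0 → ‖Φ Y s‖ ≤ C * (2 / |s|))
    (hlim : ∀ s, s ≠ 0 → Tendsto (fun Y => Φ Y s) atTop (𝓝 (F s)))
    (x : ℝ) {A B : ℝ} (hAB : (0 : ℝ) ∉ uIcc A B) :
    Tendsto (fun Y => ∫ s in A..B, Complex.exp (Complex.I * x * s) * Φ Y s) atTop
      (𝓝 (∫ s in A..B, Complex.exp (Complex.I * x * s) * F s)) := by
  have hne : ∀ s ∈ uIcc A B, s ≠ 0 := fun s hs h => hAB (h ▸ hs)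
  refine intervalIntegral.tendsto_integral_filter_of_dominated_convergence
    (fun s => C * (2 / |s|)) ?_ ?_ ?_ ?_
  · filter_upwards [eventually_ge_atTop b] with Y hY
    have := hcont Y hY
    exact Continuous.aestronglyMeasurable (by fun_prop)
  · filter_upwards [eventually_ge_atTop b] with Y hY
    refine Eventually.of_forall fun s hs => ?_
    have hnorm : ‖Complex.exp (Complex.I * x * s)‖ = 1 := by simp [Complex.norm_exp]
    rw [norm_mul, hnorm, one_mul]
    exact hbound Y hY s (hne s (uIoc_subset_uIcc hs))
  · refine ContinuousOn.intervalIntegrable ?_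
    refine continuousOn_const.mul (continuousOn_const.div (by fun_prop) ?_)
    exact fun s hs => abs_ne_zero.2 (hne s hs)
  · exact Eventually.of_forall fun s hs => (hlim s (hne s (uIoc_subset_uIcc hs))).const_mul _

theorem continuous_intervalIntegral_exp_mul {f : ℝ → ℝ} {b Y : ℝ}
    (hf : IntervalIntegrable f volume b Y) :
    Continuous fun s : ℝ => ∫ t in b..Y, Complex.exp (-(Complex.I * s * t)) * (f t : ℂ) := by
  have hfc : IntervalIntegrable (fun t : ℝ => (f t : ℂ)) volume b Y := ⟨hf.1.ofReal, hf.2.ofReal⟩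
  refine intervalIntegral.continuous_of_dominated_interval (bound := fun t => ‖(f t : ℂ)‖)
    (fun s => ?_) (fun s => ?_) hfc.norm ?_
  · exact (Continuous.aestronglyMeasurable (by fun_prop)).mul
      (intervalIntegrable_iff.1 hfc).aestronglyMeasurable
  · refine Eventually.of_forall fun t _ => ?_
    simp [Complex.norm_exp]
  · exact Eventually.of_forall fun t _ => by fun_prop

/-- Tail contribution in Pringsheim's theorem: `f` of bounded variation on `[b,∞)` with
limit `0` at `∞`, measurable, and `x < b`.  With `F(s) = lim_{Y→∞} ∫_b^Y e^{-ist} f(t) dt`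
for `s ≠ 0`, one has `lim_{T→∞, S→0⁺} ∫_{S<|s|<T} e^{ixs} F(s) ds = 0`, where the
integral over `{S<|s|<T}` is `∫_{-T}^{-S} + ∫_S^T`. -/
theorem pringsheim_tail_vanishes (b : ℝ) (f : ℝ → ℝ)
    (hmeas : Measurable f)
    (hbv : BoundedVariationOn f (Set.Ici b))
    (htop : Filter.Tendsto f Filter.atTop (nhds 0))
    (x : ℝ) (hx : x < b)
    (F : ℝ → ℂ)
    (hF : ∀ s : ℝ, s ≠ 0 → Filter.Tendsto
      (fun Y : ℝ => ∫ t in b..Y, Complex.exp (-(Complex.I * s * t)) * ((f t : ℝ) : ℂ))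
      Filter.atTop (nhds (F s))) :
    Filter.Tendsto
      (fun P : ℝ × ℝ =>
        (∫ s in (-P.1)..(-P.2), Complex.exp (Complex.I * x * s) * F s) +
          ∫ s in P.2..P.1, Complex.exp (Complex.I * x * s) * F s)
      (Filter.atTop ×ˢ nhdsWithin 0 (Set.Ioi 0))
      (nhds 0) := by
  obtain ⟨p, q, hp, hq, hp0, hq0, hfpq⟩ := hbv.exists_antitone_sub_antitone_tendsto_zero htop
  have hpn : ∀ t, 0 ≤ p t := fun t => hp.le_of_tendsto hp0 t
  have hqn : ∀ t, 0 ≤ q t := fun t => hq.le_of_tendsto hq0 t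
  have hsub : ∀ Y, b ≤ Y → ∀ t ∈ uIcc b Y, f t = p t - q t := fun Y hY t ht =>
    hfpq t (by rw [uIcc_of_le hY] at ht; exact ht.1)
  have hfi : ∀ Y, b ≤ Y → IntervalIntegrable f volume b Y := fun Y hY =>
    (hp.intervalIntegrable.sub hq.intervalIntegrable).congr fun t ht =>
      (hsub Y hY t (uIoc_subset_uIcc ht)).symm
  have hker : ∀ R Y, b ≤ Y → ∀ ε,
      |∫ t in b..Y, p t * (Real.sin (R * (t - x)) / (t - x))| ≤ ε →
      |∫ t in b..Y, q t * (Real.sin (R * (t - x)) / (t - x))| ≤ ε →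
      |∫ t in b..Y, f t * (Real.sin (R * (t - x)) / (t - x))| ≤ 2 * ε := by
    intro R Y hY ε h1 h2
    have hxY := hx.trans_le hY
    have heq : ∫ t in b..Y, f t * (Real.sin (R * (t - x)) / (t - x))
        = (∫ t in b..Y, p t * (Real.sin (R * (t - x)) / (t - x))) -
          ∫ t in b..Y, q t * (Real.sin (R * (t - x)) / (t - x)) := by
      rw [← intervalIntegral.integral_sub
        (intervalIntegrable_mul_sin_div hx hxY hp.intervalIntegrable R)
        (intervalIntegrable_mul_sin_div hx hxY hq.intervalIntegrable R)]
      refine intervalIntegral.integral_congr fun t ht => ?_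
      simp only [hsub Y hY t ht, sub_mul]
    rw [heq]
    refine (abs_sub _ _).trans ?_
    linarith
  have hbound : ∀ Y, b ≤ Y → ∀ s : ℝ, s ≠ 0 →
      ‖∫ t in b..Y, Complex.exp (-(Complex.I * s * t)) * (f t : ℂ)‖
        ≤ (p b + q b) * (2 / |s|) := by
    intro Y hY s hs
    have hint : ∀ g : ℝ → ℝ, Antitone g → IntervalIntegrable
        (fun t : ℝ => Complex.exp (-(Complex.I * s * t)) * (g t : ℂ)) volume b Y := by
      intro g hg
      have hgi : IntervalIntegrable g volume b Y := hg.intervalIntegrable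
      exact IntervalIntegrable.continuousOn_mul
        (g := fun t : ℝ => Complex.exp (-(Complex.I * s * t))) (f := fun t : ℝ => (g t : ℂ))
        ⟨hgi.1.ofReal, hgi.2.ofReal⟩
        (Continuous.continuousOn (by fun_prop))
    have heq : ∫ t in b..Y, Complex.exp (-(Complex.I * s * t)) * (f t : ℂ)
        = (∫ t in b..Y, Complex.exp (-(Complex.I * s * t)) * (p t : ℂ)) -
          ∫ t in b..Y, Complex.exp (-(Complex.I * s * t)) * (q t : ℂ) := by
      rw [← intervalIntegral.integral_sub (hint p hp) (hint q hq)]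
      refine intervalIntegral.integral_congr fun t ht => ?_
      simp only [hsub Y hY t ht, Complex.ofReal_sub, mul_sub]
    rw [heq, add_mul]
    exact (norm_sub_le _ _).trans (add_le_add (hp.norm_intervalIntegral_exp_mul_le hpn hY hs)
      (hq.norm_intervalIntegral_exp_mul_le hqn hY hs))
  rw [Metric.tendsto_nhds]
  intro ε hε
  have hε' : 0 < ε / 16 := by positivity
  have hT := ((hp.eventually_atTop_abs_intervalIntegral_mul_sin_div_le hpn hx hε').and
    (hq.eventually_atTop_abs_intervalIntegral_mul_sin_div_le hqn hx hε')).and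
    (eventually_gt_atTop 0)
  have hS := ((hp.eventually_nhdsGT_abs_intervalIntegral_mul_sin_div_le hp0 hx hε').and
    (hq.eventually_nhdsGT_abs_intervalIntegral_mul_sin_div_le hq0 hx hε')).and
    self_mem_nhdsWithin
  filter_upwards [hT.prod_mk hS] with ⟨T, S⟩ ⟨⟨⟨hTp, hTq⟩, hT0⟩, ⟨⟨hSp, hSq⟩, hS0⟩⟩
  simp only at hTp hTq hT0 hSp hSq hS0 ⊢
  have hS0 : 0 < S := hS0
  have hneg : (0 : ℝ) ∉ uIcc (-T) (-S) := fun h => by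
    have := h.2.trans_lt (max_lt (neg_lt_zero.2 hT0) (neg_lt_zero.2 hS0))
    exact lt_irrefl _ this
  have hpos : (0 : ℝ) ∉ uIcc S T := fun h => by
    exact lt_irrefl _ ((lt_min hS0 hT0).trans_le h.1)
  have hlim : ∀ A B : ℝ, (0 : ℝ) ∉ uIcc A B → _ := fun A B hAB =>
    tendsto_intervalIntegral_exp_mul_of_norm_le
      (fun Y hY => continuous_intervalIntegral_exp_mul (hfi Y hY)) hbound hF x hAB
  have hle := le_of_tendsto ((hlim _ _ hneg).add (hlim _ _ hpos)).norm (b := ε / 2) <| by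
    filter_upwards [eventually_ge_atTop b] with Y hY
    rw [intervalIntegral_exp_mul_fourier_symm_eq (hfi Y hY) hx hY, Complex.norm_real,
      Real.norm_eq_abs, abs_mul, abs_two]
    have h1 := hker T Y hY _ (hTp Y hY) (hTq Y hY)
    have h2 := hker S Y hY _ (hSp Y hY) (hSq Y hY)
    have h3 := abs_sub (∫ t in b..Y, f t * (Real.sin (T * (t - x)) / (t - x)))
      (∫ t in b..Y, f t * (Real.sin (S * (t - x)) / (t - x)))
    linarith
  rw [dist_zero_right]
  linarith
end
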